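/- Let k ≥ 1 be a fixed integer and let K_n, P_n, p_n be scalings with K_n ≥ 2 for all sufficiently large n, P_n = Ω(n), and K_n²/P_n = O(1/ln n). Define α_n by p_n·(K_n²/P_n) = (ln n + (k−1)·ln ln n + α_n)/n. If lim_{n→∞} α_n = +∞, then P[𝔾_on(n,K_n,P_n,p_n) is k-connected] → 1 and P[the minimum vertex degree of 𝔾_on(n,K_n,P_n,p_n) is at least k] → 1 as n → ∞. -/

import Mathlib

open MeasureTheory Filter Asymptotics
open scoped ENNReal

noncomputable section

/-- Key rings: `K`-element subsets of a key pool of size `P`. -/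
abbrev KeyRing (P K : ℕ) : Type := {s : Finset (Fin P) // s.card = K}

instance (P K : ℕ) : MeasurableSpace (KeyRing P K) := ⊤

/-- The uniform probability measure on key rings. -/
def uniformKeyMeasure (P K : ℕ) : Measure (KeyRing P K) :=
  (Fintype.card (KeyRing P K) : ℝ≥0∞)⁻¹ • (Measure.count : Measure (KeyRing P K))

/-- The Bernoulli measure with parameter `p` on `Bool`. -/
def bern (p : ℝ) : Measure Bool :=
  ENNReal.ofReal p • Measure.dirac true + ENNReal.ofReal (1 - p) • Measure.dirac false

/-- Sample space underlying `𝔾_on(n, K, P, p)`: independent key rings for the `n`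
nodes together with independent on/off channel states for each pair of nodes. -/
abbrev GonSpace (n K P : ℕ) : Type :=
  (Fin n → KeyRing P K) × (Sym2 (Fin n) → Bool)

/-- The probability measure of the model `𝔾_on(n, K, P, p)`: the key rings of the
`n` nodes are independent and uniform, and the channels are independent
Bernoulli(`p`) variables, independent of the key rings. -/
def gonMeasure (n K P : ℕ) (p : ℝ) : Measure (GonSpace n K P) :=
  (Measure.pi fun _ : Fin n => uniformKeyMeasure P K).prod
    (Measure.pi fun _ : Sym2 (Fin n) => bern p)

/-- The random graph `𝔾_on`: an edge is present iff the key rings intersect and the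
channel between the two nodes is on. -/
def gonGraph {n K P : ℕ} (ω : GonSpace n K P) : SimpleGraph (Fin n) where
  Adj i j := i ≠ j ∧ ((ω.1 i).1 ∩ (ω.1 j).1).Nonempty ∧ ω.2 s(i, j) = true
  symm := by
    constructor
    rintro i j ⟨h1, h2, h3⟩
    exact ⟨h1.symm, by rwa [Finset.inter_comm], by rwa [Sym2.eq_swap]⟩
  loopless := ⟨fun i h => h.1 rfl⟩

/-- The random key graph `G(n, K, P)`: an edge is present iff the key rings intersect. -/
def rkgGraph {n K P : ℕ} (ω : Fin n → KeyRing P K) : SimpleGraph (Fin n) where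
  Adj i j := i ≠ j ∧ ((ω i).1 ∩ (ω j).1).Nonempty
  symm := by
    constructor
    rintro i j ⟨h1, h2⟩
    exact ⟨h1.symm, by rwa [Finset.inter_comm]⟩
  loopless := ⟨fun i h => h.1 rfl⟩

/-- The probability measure of the random key graph model. -/
def rkgMeasure (n K P : ℕ) : Measure (Fin n → KeyRing P K) :=
  Measure.pi fun _ : Fin n => uniformKeyMeasure P K

/-- Degree of a vertex. -/
def gDeg {V : Type*} (G : SimpleGraph V) (v : V) : ℕ := Nat.card {w // G.Adj v w}

/-- Minimum vertex degree. -/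
def minDeg {V : Type*} (G : SimpleGraph V) : ℕ := sInf (Set.range (gDeg G))

/-- A graph is `k`-connected if it remains connected after the removal of any
`k - 1` of its vertices. -/
def KConnected {V : Type*} (G : SimpleGraph V) (k : ℕ) : Prop :=
  ∀ S : Finset V, S.card ≤ k - 1 → (G.induce ((S : Set V)ᶜ)).Connected

/-- Vertex connectivity: the least number of vertices whose deletion disconnects
the graph. -/
def vertexConn {V : Type*} (G : SimpleGraph V) : ℕ :=
  sInf {m | ∃ S : Finset V, S.card = m ∧ ¬ (G.induce ((S : Set V)ᶜ)).Connected}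

/-- `p_s`: the probability that two key rings share at least one key. -/
def psf (K P : ℕ) : ℝ :=
  if 2 * K ≤ P then 1 - (Nat.choose (P - K) K : ℝ) / (Nat.choose P K : ℝ) else 1

/-- `p_e = p · p_s`: the probability of an edge in `𝔾_on`. -/
def pef (K P : ℕ) (p : ℝ) : ℝ := p * psf K P

/-- The event `D_{x,ℓ}` that the node with index `x` has degree exactly `ℓ`. -/
def degEvent (n K P : ℕ) (x ℓ : ℕ) : Set (GonSpace n K P) :=
  {ω | ∃ hx : x < n, gDeg (gonGraph ω) ⟨x, hx⟩ = ℓ}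

/-- The event `E_{xy}` that the edge between the nodes with indices `x`, `y` is present. -/
def edgeEvent (n K P : ℕ) (x y : ℕ) : Set (GonSpace n K P) :=
  {ω | ∃ (hx : x < n) (hy : y < n), (gonGraph ω).Adj ⟨x, hx⟩ ⟨y, hy⟩}

/-- The event that the key rings of nodes `x` and `y` share exactly `u` keys. -/
def interCardEvent (n K P : ℕ) (x y u : ℕ) : Set (GonSpace n K P) :=
  {ω | ∃ (hx : x < n) (hy : y < n), ((ω.1 ⟨x, hx⟩).1 ∩ (ω.1 ⟨y, hy⟩).1).card = u}

/-- The event `K_{xy}` that the key rings of nodes `x` and `y` share at least one key. -/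
def keyShareEvent (n K P : ℕ) (x y : ℕ) : Set (GonSpace n K P) :=
  {ω | ∃ (hx : x < n) (hy : y < n), ((ω.1 ⟨x, hx⟩).1 ∩ (ω.1 ⟨y, hy⟩).1).Nonempty}

/-- `r_n = min(⌊P/K⌋, ⌊n/2⌋)`. -/
def rn (n K P : ℕ) : ℕ := min (P / K) (n / 2)

/-- The threshold array `J`. -/
def Jarr (n K P : ℕ) (ε lam mu : ℝ) (i : ℕ) : ℕ :=
  if i ≤ rn n K P then max ⌊(1 + ε) * (K : ℝ)⌋₊ ⌊lam * (K : ℝ) * (i : ℝ)⌋₊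
  else ⌊mu * (P : ℝ)⌋₊

/-- The event `𝓔(J)`: some set `T` of at least two nodes has a union of key rings of
size at most `J_{|T|}`. -/
def EJ (n K P : ℕ) (ε lam mu : ℝ) : Set (GonSpace n K P) :=
  {ω | ∃ T : Finset (Fin n), 2 ≤ T.card ∧
    (T.biUnion fun i => (ω.1 i).1).card ≤ Jarr n K P ε lam mu T.card}

/-!
If the graph is not `k`-connected, some set `T` of at most `n / 2` nodes has fewer than `k` outer
neighbours. Write `q = p K² / P ≈ p_e`. Given the key rings, each node misses `T` independently
with conditional probability `avoidProb`, so a union bound over `T` asks for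
`𝔼 avoidProb ^ (n - |T| - k)` to beat `C(n, |T|) (|T| n q) ^ (k - 1)`.

For `|T| ≤ n ^ (1/8)`, the keys repeated inside `T` have a bounded exponential moment, and the
expectation is at most `exp (-|T| (n q - O(1)))`; this is where `α_n → ∞` is needed. For larger
`T`, one restricts to the event that every small set of nodes holds almost as many distinct keys
as it could: then `avoidProb ≤ exp (-61/64 min (|T| q) 8)`, with an exponent `61/64` that exceeds
the factor `7/8` in `log C(n, |T|) ≲ 7/8 |T| log n`.

These estimates require `n q ≤ 2 log n`. Since `k`-connectivity is an increasing property,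
lowering `p` until this holds is harmless.
-/

open scoped BigOperators Finset

/-! ### Finite averages -/

section Averages

variable {ι α : Type*} [DecidableEq ι]

theorem dependsOn_apply_update {β : Type*} {f : (ι → α) → β} {T : Finset ι}
    (hf : DependsOn f (T : Set ι)) {i : ι} (hi : i ∉ T) (σ : ι → α) (s : α) :
    f (Function.update σ i s) = f σ :=
  hf fun _ hj => Function.update_of_ne (ne_of_mem_of_not_mem hj hi) _ _

variable [Fintype ι] [Fintype α] [Nonempty α]

theorem expect_eq_expect_expect_update {M : Type*} [AddCommMonoid M] [Module ℚ≥0 M]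
    (F : (ι → α) → M) (i : ι) :
    𝔼 σ, F σ = 𝔼 σ : ι → α, 𝔼 s : α, F (Function.update σ i s) := by
  calc 𝔼 σ, F σ = 𝔼 σ : ι → α, 𝔼 _s : α, F σ := by simp only [Fintype.expect_const]
    _ = 𝔼 x : (ι → α) × α, F x.1 :=
      (Finset.expect_product' Finset.univ Finset.univ fun σ _ => F σ).symm
    _ = 𝔼 x : (ι → α) × α, F (Function.update x.1 i x.2) :=
      Finset.expect_nbij' (fun x => (Function.update x.1 i x.2, x.1 i))
        (fun x => (Function.update x.1 i x.2, x.1 i)) (by simp) (by simp) (by simp) (by simp)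
        (by simp)
    _ = 𝔼 σ : ι → α, 𝔼 s : α, F (Function.update σ i s) :=
      Finset.expect_product' Finset.univ Finset.univ fun σ s => F (Function.update σ i s)

theorem expect_mul_prod_apply {R : Type*} [CommSemiring R] [Algebra ℚ≥0 R] {T W : Finset ι}
    (hWT : Disjoint W T) {F : (ι → α) → R} {g : ι → (ι → α) → α → R}
    (hF : DependsOn F (T : Set ι)) (hg : ∀ i, DependsOn (g i) (T : Set ι)) :
    𝔼 σ, F σ * ∏ i ∈ W, g i σ (σ i) = 𝔼 σ, F σ * ∏ i ∈ W, 𝔼 s, g i σ s := by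
  induction W using Finset.induction_on generalizing F with
  | empty => simp
  | insert i W hi ih =>
    rw [Finset.disjoint_insert_left] at hWT
    have hresample : ∀ σ s, F (Function.update σ i s) *
        ∏ j ∈ insert i W, g j (Function.update σ i s) (Function.update σ i s j)
        = F σ * (∏ j ∈ W, g j σ (σ j)) * g i σ s := fun σ s => by
      have hW : ∀ j ∈ W, g j σ (Function.update σ i s j) = g j σ (σ j) := fun j hj => by
        rw [Function.update_of_ne (ne_of_mem_of_not_mem hj hi)]
      simp_rw [dependsOn_apply_update hF hWT.1, fun j => dependsOn_apply_update (hg j) hWT.1]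
      rw [Finset.prod_insert hi, Function.update_self, Finset.prod_congr rfl hW]
      ring
    calc 𝔼 σ, F σ * ∏ j ∈ insert i W, g j σ (σ j)
        = 𝔼 σ, (F σ * 𝔼 s, g i σ s) * ∏ j ∈ W, g j σ (σ j) := by
          rw [expect_eq_expect_expect_update _ i]
          simp_rw [hresample, ← Finset.mul_expect]
          exact Finset.expect_congr rfl fun σ _ => by ring
      _ = 𝔼 σ, (F σ * 𝔼 s, g i σ s) * ∏ j ∈ W, 𝔼 s, g j σ s :=
          ih hWT.2 fun σ τ hστ => by simp only [hF hστ, hg i hστ]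
      _ = 𝔼 σ, F σ * ∏ j ∈ insert i W, 𝔼 s, g j σ s :=
          Finset.expect_congr rfl fun σ _ => by rw [Finset.prod_insert hi]; ring

end Averages

/-! ### Uniform key rings -/

theorem descFactorial_mul_pow_le {m n : ℕ} (h : m ≤ n) (a : ℕ) :
    m.descFactorial a * n ^ a ≤ n.descFactorial a * m ^ a := by
  induction a with
  | zero => simp
  | succ a ih =>
    have hfactor : (m - a) * n ≤ (n - a) * m := by
      rw [Nat.sub_mul, Nat.sub_mul, mul_comm m n]
      exact Nat.sub_le_sub_left (Nat.mul_le_mul_left a h) _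
    calc m.descFactorial (a + 1) * n ^ (a + 1)
        = ((m - a) * n) * (m.descFactorial a * n ^ a) := by
          rw [Nat.descFactorial_succ]; ring
      _ ≤ ((n - a) * m) * (n.descFactorial a * m ^ a) := Nat.mul_le_mul hfactor ih
      _ = n.descFactorial (a + 1) * m ^ (a + 1) := by rw [Nat.descFactorial_succ]; ring

theorem choose_sub_sub_le {m n a : ℕ} (hmn : m ≤ n) (ham : a ≤ m) :
    ((n - a).choose (m - a) : ℝ) ≤ n.choose m * ((m : ℝ) / n) ^ a := by
  rcases n.eq_zero_or_pos with rfl | hn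
  · obtain rfl : m = 0 := by omega
    obtain rfl : a = 0 := by omega
    simp
  have hchoose : m.choose a * n ^ a ≤ n.choose a * m ^ a := by
    refine Nat.le_of_mul_le_mul_left ?_ a.factorial_pos
    simpa only [Nat.descFactorial_eq_factorial_mul_choose, mul_assoc]
      using descFactorial_mul_pow_le hmn a
  have hpos : 0 < n.choose a := Nat.choose_pos (ham.trans hmn)
  rw [div_pow, mul_div_assoc', le_div_iff₀ (by positivity)]
  have hnat : (n - a).choose (m - a) * n ^ a ≤ n.choose m * m ^ a := by
    refine Nat.le_of_mul_le_mul_left ?_ hpos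
    calc n.choose a * ((n - a).choose (m - a) * n ^ a)
        = n.choose m * (m.choose a * n ^ a) := by
          rw [← mul_assoc, ← mul_assoc, Nat.choose_mul ham]
      _ ≤ n.choose m * (n.choose a * m ^ a) := Nat.mul_le_mul_left _ hchoose
      _ = n.choose a * (n.choose m * m ^ a) := by ring
  exact_mod_cast hnat

theorem choose_sub_le {m n a : ℕ} (hmn : m ≤ n) (han : a ≤ n) :
    ((n - a).choose m : ℝ) ≤ n.choose m * (1 - (m : ℝ) / n) ^ a := by
  rcases n.eq_zero_or_pos with rfl | hn
  · obtain rfl : a = 0 := by omega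
    simp
  have hn' : (n : ℝ) ≠ 0 := by positivity
  have hcompl : 1 - (m : ℝ) / n = ((n - m : ℕ) : ℝ) / n := by
    rw [Nat.cast_sub hmn, sub_div, div_self hn']
  rw [hcompl]
  rcases le_or_gt a (n - m) with ha | ha
  · have h := choose_sub_sub_le (Nat.sub_le n m) ha
    rwa [Nat.choose_symm hmn, tsub_right_comm, Nat.choose_symm (by omega)] at h
  · rw [Nat.choose_eq_zero_of_lt (by omega), Nat.cast_zero]
    positivity

section KeyRing

variable {P K : ℕ}

theorem nonempty_keyRing (hKP : K ≤ P) : Nonempty (KeyRing P K) := by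
  obtain ⟨s, -, hs⟩ := Finset.exists_subset_card_eq
    (s := (Finset.univ : Finset (Fin P))) (n := K) (by simpa using hKP)
  exact ⟨⟨s, hs⟩⟩

theorem expect_keyRing_ite_le (hKP : K ≤ P) (q : KeyRing P K → Prop) [DecidablePred q] {x : ℝ}
    (hx : (#(Finset.univ.filter q) : ℝ) ≤ P.choose K * x) :
    𝔼 s, (if q s then (1 : ℝ) else 0) ≤ x := by
  rwa [Fintype.expect_eq_sum_div_card, Finset.sum_boole, Fintype.card_finset_len,
    Fintype.card_fin, div_le_iff₀' (by exact_mod_cast Nat.choose_pos hKP)]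

theorem expect_subset_le (hKP : K ≤ P) (A : Finset (Fin P)) :
    𝔼 s : KeyRing P K, (if A ⊆ s.1 then (1 : ℝ) else 0) ≤ ((K : ℝ) / P) ^ #A := by
  refine expect_keyRing_ite_le hKP _ ?_
  rcases lt_or_ge K #A with h | h
  · rw [Finset.card_eq_zero.2 (Finset.filter_eq_empty_iff.2 fun s _ hs =>
      (h.trans_le (Finset.card_le_card hs)).ne' s.2), Nat.cast_zero]
    positivity
  refine le_trans ?_ (choose_sub_sub_le hKP h)
  have hinj : #{s : KeyRing P K | A ⊆ s.1} ≤ #(Finset.powersetCard (K - #A) Aᶜ) := by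
    refine Finset.card_le_card_of_injOn (fun s => s.1 \ A) (fun s hs => ?_) fun s hs t ht hst => ?_
    · have hAs : A ⊆ s.1 := by simpa using hs
      simp only [Finset.mem_coe, Finset.mem_powersetCard, Finset.card_sdiff_of_subset hAs, s.2,
        and_true]
      exact fun a ha => Finset.mem_compl.2 (Finset.mem_sdiff.1 ha).2
    · have hAs : A ⊆ s.1 := by simpa using hs
      have hAt : A ⊆ t.1 := by simpa using ht
      rw [Subtype.ext_iff, ← Finset.sdiff_union_of_subset hAs, ← Finset.sdiff_union_of_subset hAt]
      exact congrArg (· ∪ A) hst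
  rw [Finset.card_powersetCard, Finset.card_compl, Fintype.card_fin] at hinj
  exact_mod_cast hinj

theorem expect_disjoint_le (hKP : K ≤ P) (A : Finset (Fin P)) :
    𝔼 s : KeyRing P K, (if Disjoint A s.1 then (1 : ℝ) else 0) ≤ Real.exp (-(K / P * #A)) := by
  have hinj : #{s : KeyRing P K | Disjoint A s.1} ≤ #(Finset.powersetCard K Aᶜ) := by
    refine Finset.card_le_card_of_injOn (fun s => s.1) (fun s hs => ?_)
      fun s _ t _ hst => Subtype.ext hst
    have hAs : Disjoint s.1 A := by simpa [disjoint_comm] using hs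
    exact Finset.mem_powersetCard.2 ⟨Finset.subset_compl_iff_disjoint_right.2 hAs, s.2⟩
  rw [Finset.card_powersetCard, Finset.card_compl, Fintype.card_fin] at hinj
  calc 𝔼 s : KeyRing P K, (if Disjoint A s.1 then (1 : ℝ) else 0)
      ≤ (1 - (K : ℝ) / P) ^ #A := expect_keyRing_ite_le hKP _ <|
        (Nat.cast_le.2 hinj).trans (choose_sub_le hKP (by simpa using Finset.card_le_univ A))
    _ ≤ Real.exp (-(K / P)) ^ #A := pow_le_pow_left₀
        (sub_nonneg.2 (div_le_one_of_le₀ (by exact_mod_cast hKP) (Nat.cast_nonneg _)))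
        (Real.one_sub_le_exp_neg _) _
    _ = Real.exp (-(K / P * #A)) := by rw [← Real.exp_nat_mul]; ring_nf

theorem expect_inter_nonempty_le (hKP : K ≤ P) (A : Finset (Fin P)) :
    𝔼 s : KeyRing P K, (if (A ∩ s.1).Nonempty then (1 : ℝ) else 0) ≤ K / P * #A := by
  have hcard : ∀ s : KeyRing P K, (if (A ∩ s.1).Nonempty then (1 : ℝ) else 0)
      ≤ ∑ a ∈ A, (if a ∈ s.1 then (1 : ℝ) else 0) := fun s => by
    rw [Finset.sum_boole, Finset.filter_mem_eq_inter]
    split_ifs with h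
    · exact_mod_cast h.card_pos
    · positivity
  calc 𝔼 s : KeyRing P K, (if (A ∩ s.1).Nonempty then (1 : ℝ) else 0)
      ≤ 𝔼 s : KeyRing P K, ∑ a ∈ A, (if a ∈ s.1 then (1 : ℝ) else 0) :=
        Finset.expect_le_expect fun s _ => hcard s
    _ = ∑ a ∈ A, 𝔼 s : KeyRing P K, (if a ∈ s.1 then (1 : ℝ) else 0) :=
        Finset.expect_sum_comm _ _ _
    _ ≤ ∑ _a ∈ A, (K : ℝ) / P := Finset.sum_le_sum fun a _ => by
        simpa only [Finset.singleton_subset_iff, Finset.card_singleton, pow_one]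
          using expect_subset_le hKP {a}
    _ = K / P * #A := by rw [Finset.sum_const, nsmul_eq_mul, mul_comm]

theorem expect_pow_card_inter_le (hKP : K ≤ P) (A : Finset (Fin P)) {z : ℝ} (hz : 1 ≤ z) :
    𝔼 s : KeyRing P K, z ^ #(A ∩ s.1) ≤ Real.exp ((z - 1) * (K / P) * #A) := by
  have : 0 ≤ z - 1 := by linarith
  have hexpand : ∀ s : KeyRing P K, z ^ #(A ∩ s.1)
      = ∑ B ∈ A.powerset, (z - 1) ^ #B * (if B ⊆ s.1 then (1 : ℝ) else 0) := fun s => by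
    have hbinom := Finset.sum_pow_mul_eq_add_pow (z - 1) 1 (A ∩ s.1)
    simp only [one_pow, mul_one, sub_add_cancel] at hbinom
    simp only [← hbinom, mul_ite, mul_one, mul_zero, ← Finset.sum_filter]
    congr 1
    ext B
    simp only [Finset.mem_powerset, Finset.mem_filter, Finset.subset_inter_iff]
  calc 𝔼 s : KeyRing P K, z ^ #(A ∩ s.1)
      = ∑ B ∈ A.powerset, (z - 1) ^ #B * 𝔼 s : KeyRing P K, (if B ⊆ s.1 then (1 : ℝ) else 0) := by
        simp_rw [hexpand, Finset.mul_expect]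
        exact Finset.expect_sum_comm _ _ _
    _ ≤ ∑ B ∈ A.powerset, ((z - 1) * (K / P)) ^ #B * 1 ^ (#A - #B) :=
        Finset.sum_le_sum fun B _ => by
          rw [one_pow, mul_one, mul_pow]
          exact mul_le_mul_of_nonneg_left (expect_subset_le hKP B) (by positivity)
    _ = ((z - 1) * (K / P) + 1) ^ #A := Finset.sum_pow_mul_eq_add_pow _ _ _
    _ ≤ Real.exp ((z - 1) * (K / P)) ^ #A :=
        pow_le_pow_left₀ (by positivity) (Real.add_one_le_exp _) _
    _ = Real.exp ((z - 1) * (K / P) * #A) := by rw [← Real.exp_nat_mul]; ring_nf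

end KeyRing

/-! ### Unions of key rings -/

section KeyUnion

variable {ι : Type*} {P K : ℕ}

/-- The set of keys held by at least one node of `T`, for the assignment `σ` of key rings. -/
def keyUnion (σ : ι → KeyRing P K) (T : Finset ι) : Finset (Fin P) :=
  T.biUnion fun i => (σ i).1

theorem keyUnion_mono (σ : ι → KeyRing P K) {S T : Finset ι} (h : S ⊆ T) :
    keyUnion σ S ⊆ keyUnion σ T :=
  Finset.biUnion_subset_biUnion_of_subset_left _ h

theorem dependsOn_keyUnion (T : Finset ι) :
    DependsOn (fun σ : ι → KeyRing P K => keyUnion σ T) (T : Set ι) := fun _ _ h =>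
  Finset.biUnion_congr rfl fun i hi => by rw [h i hi]

theorem card_keyUnion_le (σ : ι → KeyRing P K) (T : Finset ι) : #(keyUnion σ T) ≤ K * #T := by
  rw [mul_comm]
  exact Finset.card_biUnion_le_card_mul _ _ _ fun i _ => (σ i).2.le

/-- The number of repetitions among the `K * #T` keys handed out to the nodes of `T`. -/
def repeatedKeys (σ : ι → KeyRing P K) (T : Finset ι) : ℕ := K * #T - #(keyUnion σ T)

theorem card_keyUnion_add_repeatedKeys (σ : ι → KeyRing P K) (T : Finset ι) :
    #(keyUnion σ T) + repeatedKeys σ T = K * #T :=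
  Nat.add_sub_of_le (card_keyUnion_le σ T)

variable [DecidableEq ι]

theorem keyUnion_insert (σ : ι → KeyRing P K) (T : Finset ι) (i : ι) :
    keyUnion σ (insert i T) = (σ i).1 ∪ keyUnion σ T :=
  Finset.biUnion_insert

theorem card_keyUnion_insert (σ : ι → KeyRing P K) (T : Finset ι) (i : ι) :
    #(keyUnion σ (insert i T)) = #((σ i).1 \ keyUnion σ T) + #(keyUnion σ T) := by
  rw [keyUnion_insert, ← Finset.sdiff_union_self_eq_union,
    Finset.card_union_of_disjoint Finset.sdiff_disjoint]

theorem repeatedKeys_insert {T : Finset ι} {i : ι} (hi : i ∉ T) (σ : ι → KeyRing P K) :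
    repeatedKeys σ (insert i T) = repeatedKeys σ T + #(keyUnion σ T ∩ (σ i).1) := by
  have hinsert := card_keyUnion_add_repeatedKeys σ (insert i T)
  have hT := card_keyUnion_add_repeatedKeys σ T
  have hunion := Finset.card_union_add_card_inter (keyUnion σ T) (σ i).1
  rw [keyUnion_insert, Finset.card_insert_of_notMem hi, mul_add_one, Finset.union_comm] at hinsert
  rw [(σ i).2] at hunion
  omega

theorem keyUnion_update {T : Finset ι} {i : ι} (hi : i ∉ T) (σ : ι → KeyRing P K)
    (s : KeyRing P K) : keyUnion (Function.update σ i s) T = keyUnion σ T :=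
  dependsOn_apply_update (dependsOn_keyUnion T) hi σ s

theorem expect_pow_repeatedKeys_le [Fintype ι] (hKP : K ≤ P) {z : ℝ} (hz : 1 ≤ z)
    (T : Finset ι) :
    𝔼 σ : ι → KeyRing P K, z ^ repeatedKeys σ T
      ≤ Real.exp ((z - 1) * ((K : ℝ) ^ 2 / P) * (#T : ℝ) ^ 2) := by
  have := nonempty_keyRing hKP
  have : 0 ≤ z - 1 := by linarith
  induction T using Finset.induction_on with
  | empty => simp [repeatedKeys]
  | insert i T hi ih =>
    have hresample : ∀ (σ : ι → KeyRing P K) (s : KeyRing P K),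
        z ^ repeatedKeys (Function.update σ i s) (insert i T)
          = z ^ repeatedKeys σ T * z ^ #(keyUnion σ T ∩ s.1) := fun σ s => by
      rw [repeatedKeys_insert hi, pow_add, Function.update_self, repeatedKeys,
        keyUnion_update hi, repeatedKeys]
    calc 𝔼 σ : ι → KeyRing P K, z ^ repeatedKeys σ (insert i T)
        = 𝔼 σ : ι → KeyRing P K, z ^ repeatedKeys σ T *
          𝔼 s : KeyRing P K, z ^ #(keyUnion σ T ∩ s.1) := by
          rw [expect_eq_expect_expect_update _ i]
          simp_rw [hresample, Finset.mul_expect]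
      _ ≤ 𝔼 σ : ι → KeyRing P K, z ^ repeatedKeys σ T *
          Real.exp ((z - 1) * (K / P) * (K * #T)) := by
          refine Finset.expect_le_expect fun σ _ => ?_
          refine mul_le_mul_of_nonneg_left ?_ (by positivity)
          refine (expect_pow_card_inter_le hKP _ hz).trans ?_
          gcongr
          exact_mod_cast card_keyUnion_le σ T
      _ ≤ Real.exp ((z - 1) * ((K : ℝ) ^ 2 / P) * (#T : ℝ) ^ 2) *
          Real.exp ((z - 1) * (K / P) * (K * #T)) := by
          rw [← Finset.expect_mul]
          gcongr
      _ = Real.exp ((z - 1) * ((K : ℝ) ^ 2 / P) * ((#T : ℝ) ^ 2 + #T)) := by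
          rw [← Real.exp_add]; ring_nf
      _ ≤ Real.exp ((z - 1) * ((K : ℝ) ^ 2 / P) * (#(insert i T) : ℝ) ^ 2) := by
          rw [Finset.card_insert_of_notMem hi]
          gcongr
          push_cast
          nlinarith [Nat.cast_nonneg (α := ℝ) #T]

end KeyUnion

/-! ### Random subsets -/

section SubsetAverage

variable {ι : Type*} {p : ℝ} {T : Finset ι}

/-- The average of `f` over a random subset of `T` that contains each element of `T`
independently with probability `p`. -/
def subsetAverage (p : ℝ) (T : Finset ι) (f : Finset ι → ℝ) : ℝ :=
  ∑ B ∈ T.powerset, p ^ #B * (1 - p) ^ (#T - #B) * f B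

theorem subsetAverage_mono (hp0 : 0 ≤ p) (hp1 : p ≤ 1) {f g : Finset ι → ℝ}
    (h : ∀ B ⊆ T, f B ≤ g B) : subsetAverage p T f ≤ subsetAverage p T g :=
  Finset.sum_le_sum fun B hB => mul_le_mul_of_nonneg_left (h B (Finset.mem_powerset.1 hB))
    (mul_nonneg (pow_nonneg hp0 _) (pow_nonneg (sub_nonneg.2 hp1) _))

theorem subsetAverage_add (p : ℝ) (T : Finset ι) (f g : Finset ι → ℝ) :
    subsetAverage p T (fun B => f B + g B) = subsetAverage p T f + subsetAverage p T g := by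
  simp only [subsetAverage, mul_add, Finset.sum_add_distrib]

theorem subsetAverage_const_mul (p : ℝ) (T : Finset ι) (c : ℝ) (f : Finset ι → ℝ) :
    subsetAverage p T (fun B => c * f B) = c * subsetAverage p T f := by
  simp only [subsetAverage, Finset.mul_sum]
  exact Finset.sum_congr rfl fun B _ => by ring

theorem subsetAverage_pow (p : ℝ) (T : Finset ι) (x : ℝ) :
    subsetAverage p T (fun B => x ^ #B) = (1 - p + p * x) ^ #T := by
  rw [add_comm, ← Finset.sum_pow_mul_eq_add_pow]
  exact Finset.sum_congr rfl fun B _ => by ring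

theorem subsetAverage_const (p : ℝ) (T : Finset ι) (c : ℝ) :
    subsetAverage p T (fun _ => c) = c := by
  simpa using (subsetAverage_const_mul p T c fun B => 1 ^ #B).trans
    (congrArg (c * ·) (subsetAverage_pow p T 1))

theorem subsetAverage_prod (p : ℝ) (T : Finset ι) (g : ι → ℝ) :
    subsetAverage p T (fun B => ∏ i ∈ B, g i) = ∏ i ∈ T, (p * g i + (1 - p)) := by
  classical
  rw [Finset.prod_add]
  refine Finset.sum_congr rfl fun B hB => ?_
  rw [Finset.prod_mul_distrib, Finset.prod_const, Finset.prod_const,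
    Finset.card_sdiff_of_subset (Finset.mem_powerset.1 hB)]
  ring

theorem subsetAverage_insert [DecidableEq ι] {i : ι} (hi : i ∉ T) (p : ℝ) (f : Finset ι → ℝ) :
    subsetAverage p (insert i T) f
      = subsetAverage p T (fun B => (1 - p) * f B + p * f (insert i B)) := by
  rw [subsetAverage_add, subsetAverage, Finset.sum_powerset_insert hi,
    Finset.card_insert_of_notMem hi]
  refine congrArg₂ (· + ·) (Finset.sum_congr rfl fun B hB => ?_)
    (Finset.sum_congr rfl fun B hB => ?_)
  · rw [Nat.sub_add_comm (Finset.card_le_card (Finset.mem_powerset.1 hB)), pow_succ]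
    ring
  · rw [Finset.card_insert_of_notMem fun h => hi (Finset.mem_powerset.1 hB h),
      Nat.add_sub_add_right, pow_succ]
    ring

end SubsetAverage

/-! ### The probability that a fresh node is not linked to a given set -/

theorem exp_neg_le_quadratic {y : ℝ} (hy : 0 ≤ y) : Real.exp (-y) ≤ 1 - y + y ^ 2 / 2 := by
  have hpos : 0 ≤ 1 - y + y ^ 2 / 2 := by nlinarith [sq_nonneg (y - 1)]
  rw [Real.exp_neg, inv_le_iff_one_le_mul₀ (Real.exp_pos _)]
  calc (1 : ℝ) ≤ (1 - y + y ^ 2 / 2) * (1 + y + y ^ 2 / 2) := by nlinarith [sq_nonneg (y ^ 2)]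
    _ ≤ (1 - y + y ^ 2 / 2) * Real.exp y :=
      mul_le_mul_of_nonneg_left (Real.quadratic_le_exp_of_nonneg hy) hpos

theorem one_sub_add_mul_exp_neg_le {p x y : ℝ} (hp : 0 ≤ p) (hy : 0 ≤ y) (hyx : y ≤ x) :
    1 - p + p * Real.exp (-y) ≤ Real.exp (-(p * (1 - x / 2) * y)) := by
  have hsq : y ^ 2 ≤ x * y := by nlinarith
  calc 1 - p + p * Real.exp (-y) ≤ 1 - p + p * (1 - y + y ^ 2 / 2) := by
        gcongr
        exact exp_neg_le_quadratic hy
    _ ≤ 1 - p * (1 - x / 2) * y := by nlinarith [mul_le_mul_of_nonneg_left hsq hp]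
    _ ≤ Real.exp (-(p * (1 - x / 2) * y)) := Real.one_sub_le_exp_neg _

section AvoidProb

variable {ι : Type*} {P K : ℕ} {p : ℝ}

/-- The nodes of `T` whose key ring under `σ` meets the key ring `s`. -/
def linkedNodes (σ : ι → KeyRing P K) (T : Finset ι) (s : KeyRing P K) : Finset ι :=
  T.filter fun i => ((σ i).1 ∩ s.1).Nonempty

theorem dependsOn_linkedNodes (T : Finset ι) :
    DependsOn (fun σ : ι → KeyRing P K => linkedNodes σ T) (T : Set ι) := fun σ τ h => by
  funext s
  exact Finset.filter_congr fun i hi => by rw [h i hi]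

/-- Given the key rings `σ`, the probability that a node with a fresh key ring, joined to each
linked node independently with probability `p`, has no edge towards `T`. -/
def avoidProb (p : ℝ) (σ : ι → KeyRing P K) (T : Finset ι) : ℝ :=
  𝔼 s : KeyRing P K, (1 - p) ^ #(linkedNodes σ T s)

theorem avoidProb_nonneg (hp1 : p ≤ 1) (σ : ι → KeyRing P K) (T : Finset ι) :
    0 ≤ avoidProb p σ T :=
  Finset.expect_nonneg fun _ _ => pow_nonneg (sub_nonneg.2 hp1) _

theorem avoidProb_le_one (hKP : K ≤ P) (hp0 : 0 ≤ p) (hp1 : p ≤ 1) (σ : ι → KeyRing P K)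
    (T : Finset ι) : avoidProb p σ T ≤ 1 :=
  have := nonempty_keyRing hKP
  Finset.expect_le Finset.univ_nonempty fun _ _ =>
    pow_le_one₀ (sub_nonneg.2 hp1) (sub_le_self _ hp0)

theorem expect_card_linkedNodes_le (hKP : K ≤ P) (σ : ι → KeyRing P K) (T : Finset ι) :
    𝔼 s : KeyRing P K, (#(linkedNodes σ T s) : ℝ) ≤ #T * ((K : ℝ) ^ 2 / P) := by
  calc 𝔼 s : KeyRing P K, (#(linkedNodes σ T s) : ℝ)
      = ∑ i ∈ T, 𝔼 s : KeyRing P K, (if ((σ i).1 ∩ s.1).Nonempty then (1 : ℝ) else 0) := by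
        simp only [linkedNodes, Finset.card_filter, Nat.cast_sum, Nat.cast_ite, Nat.cast_one,
          Nat.cast_zero]
        exact Finset.expect_sum_comm _ _ _
    _ ≤ ∑ i ∈ T, (K : ℝ) / P * #(σ i).1 :=
        Finset.sum_le_sum fun i _ => expect_inter_nonempty_le hKP _
    _ = #T * ((K : ℝ) ^ 2 / P) := by
        simp only [(σ _).2, Finset.sum_const, nsmul_eq_mul]
        ring

theorem one_sub_pow_card_linkedNodes (p : ℝ) (σ : ι → KeyRing P K) (T : Finset ι)
    (s : KeyRing P K) :
    (1 - p) ^ #(linkedNodes σ T s)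
      = subsetAverage p T (fun B => if Disjoint (keyUnion σ B) s.1 then 1 else 0) := by
  have hprod : ∀ B : Finset ι, (if Disjoint (keyUnion σ B) s.1 then (1 : ℝ) else 0)
      = ∏ i ∈ B, (if Disjoint (σ i).1 s.1 then (1 : ℝ) else 0) := fun B => by
    simp only [keyUnion, Finset.disjoint_biUnion_left, Finset.prod_boole]
  have hfactor : ∀ i, p * (if Disjoint (σ i).1 s.1 then (1 : ℝ) else 0) + (1 - p)
      = if ((σ i).1 ∩ s.1).Nonempty then 1 - p else 1 := fun i => by
    simp only [← Finset.not_disjoint_iff_nonempty_inter, ite_not]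
    split_ifs <;> ring
  simp_rw [hprod, subsetAverage_prod, hfactor]
  rw [Finset.prod_ite, Finset.prod_const, Finset.prod_const_one, mul_one, linkedNodes]

theorem avoidProb_le_subsetAverage (hKP : K ≤ P) (hp0 : 0 ≤ p) (hp1 : p ≤ 1)
    (σ : ι → KeyRing P K) (T : Finset ι) :
    avoidProb p σ T ≤ subsetAverage p T (fun B => Real.exp (-(K / P * #(keyUnion σ B)))) := by
  have hswap : avoidProb p σ T = subsetAverage p T
      (fun B => 𝔼 s : KeyRing P K, if Disjoint (keyUnion σ B) s.1 then 1 else 0) := by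
    simp only [avoidProb, one_sub_pow_card_linkedNodes, subsetAverage, Finset.mul_expect]
    exact Finset.expect_sum_comm _ _ _
  rw [hswap]
  exact subsetAverage_mono hp0 hp1 fun B _ => expect_disjoint_le hKP _

theorem exp_card_keyUnion_insert_le [DecidableEq ι] (σ : ι → KeyRing P K) {B T : Finset ι}
    (hBT : B ⊆ T) (i : ι) :
    Real.exp (-(K / P * #(keyUnion σ (insert i B))))
      ≤ Real.exp (-(K / P * #((σ i).1 \ keyUnion σ T))) *
        Real.exp (-(K / P * #(keyUnion σ B))) := by
  rw [← Real.exp_add, ← neg_add, ← mul_add, card_keyUnion_insert]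
  push_cast
  gcongr
  exact keyUnion_mono σ hBT

theorem subsetAverage_exp_keyUnion_le (hp0 : 0 ≤ p) (hp1 : p ≤ 1) (σ : ι → KeyRing P K)
    (T : Finset ι) :
    subsetAverage p T (fun B => Real.exp (-(K / P * #(keyUnion σ B))))
      ≤ Real.exp (-(p * (1 - (K : ℝ) ^ 2 / P / 2) * (K / P * #(keyUnion σ T)))) := by
  classical
  induction T using Finset.induction_on with
  | empty => simp [subsetAverage, keyUnion]
  | insert i T hi ih =>
    have hnew : (K : ℝ) / P * #((σ i).1 \ keyUnion σ T) ≤ (K : ℝ) ^ 2 / P := by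
      have hK : #((σ i).1 \ keyUnion σ T) ≤ K :=
        (Finset.card_le_card Finset.sdiff_subset).trans_eq (σ i).2
      calc (K : ℝ) / P * #((σ i).1 \ keyUnion σ T) ≤ K / P * K := by gcongr
        _ = (K : ℝ) ^ 2 / P := by ring
    calc subsetAverage p (insert i T) (fun B => Real.exp (-(K / P * #(keyUnion σ B))))
        ≤ subsetAverage p T
            (fun B => (1 - p + p * Real.exp (-(K / P * #((σ i).1 \ keyUnion σ T)))) *
              Real.exp (-(K / P * #(keyUnion σ B)))) := by
          rw [subsetAverage_insert hi]
          refine subsetAverage_mono hp0 hp1 fun B hB => ?_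
          rw [add_mul, mul_assoc p]
          gcongr
          exact exp_card_keyUnion_insert_le σ hB i
      _ ≤ Real.exp (-(p * (1 - (K : ℝ) ^ 2 / P / 2) * (K / P * #((σ i).1 \ keyUnion σ T)))) *
            Real.exp (-(p * (1 - (K : ℝ) ^ 2 / P / 2) * (K / P * #(keyUnion σ T)))) := by
          rw [subsetAverage_const_mul]
          refine mul_le_mul (one_sub_add_mul_exp_neg_le hp0 (by positivity) hnew) ih ?_
            (Real.exp_pos _).le
          exact (subsetAverage_const p T 0).symm.trans_le
            (subsetAverage_mono hp0 hp1 fun B _ => (Real.exp_pos _).le)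
      _ = Real.exp (-(p * (1 - (K : ℝ) ^ 2 / P / 2) * (K / P * #(keyUnion σ (insert i T))))) := by
          rw [← Real.exp_add, card_keyUnion_insert]
          push_cast
          ring_nf

theorem avoidProb_le_exp_keyUnion (hKP : K ≤ P) (hp0 : 0 ≤ p) (hp1 : p ≤ 1)
    (σ : ι → KeyRing P K) (T : Finset ι) :
    avoidProb p σ T
      ≤ Real.exp (-(p * (1 - (K : ℝ) ^ 2 / P / 2) * (K / P * #(keyUnion σ T)))) :=
  (avoidProb_le_subsetAverage hKP hp0 hp1 σ T).trans (subsetAverage_exp_keyUnion_le hp0 hp1 σ T)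

end AvoidProb

/-! ### Separating sets -/

section Graph

variable {V : Type*} {G : SimpleGraph V} {k : ℕ}

theorem KConnected.mono {H : SimpleGraph V} (hGH : G ≤ H) (hG : KConnected G k) :
    KConnected H k := fun S hS =>
  (hG S hS).mono (SimpleGraph.comap_monotone _ hGH)

variable [Fintype V]

open Classical in
/-- The outer vertex boundary of `T`: the vertices outside `T` adjacent to a vertex of `T`. -/
def outerNbhd (G : SimpleGraph V) (T : Finset V) : Finset V :=
  Finset.univ.filter fun v => v ∉ T ∧ ∃ i ∈ T, G.Adj i v

theorem mem_outerNbhd {T : Finset V} {v : V} :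
    v ∈ outerNbhd G T ↔ v ∉ T ∧ ∃ i ∈ T, G.Adj i v := by
  simp only [outerNbhd, Finset.mem_filter_univ]

theorem outerNbhd_subset_iff {S T : Finset V} :
    outerNbhd G T ⊆ S ↔ ∀ i ∈ T, ∀ w, G.Adj i w → w ∉ S → w ∈ T := by
  refine ⟨fun h i hi w hiw hwS => ?_, fun h w hw => ?_⟩
  · by_contra hwT
    exact hwS (h (mem_outerNbhd.2 ⟨hwT, i, hi, hiw⟩))
  · obtain ⟨hwT, i, hi, hiw⟩ := mem_outerNbhd.1 hw
    by_contra hwS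
    exact hwT (h i hi w hiw hwS)

theorem outerNbhd_compl_union_subset [DecidableEq V] {S T : Finset V} (h : outerNbhd G T ⊆ S) :
    outerNbhd G (T ∪ S)ᶜ ⊆ S := by
  rw [outerNbhd_subset_iff] at h ⊢
  intro i hi w hiw hwS
  simp only [Finset.mem_compl, Finset.mem_union, not_or] at hi ⊢
  exact ⟨fun hwT => hi.1 (h w hwT i hiw.symm hi.2), hwS⟩

theorem exists_outerNbhd_subset {S : Finset V} (hS : #S < Fintype.card V)
    (hG : ¬ (G.induce ((S : Set V)ᶜ)).Connected) :
    ∃ T : Finset V, T.Nonempty ∧ 2 * #T ≤ Fintype.card V ∧ outerNbhd G T ⊆ S := by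
  classical
  obtain ⟨v₀, -, hv₀⟩ :=
    Finset.exists_mem_notMem_of_card_lt_card (s := S) (t := Finset.univ) (by simpa using hS)
  have : Nonempty ((S : Set V)ᶜ : Set V) := ⟨⟨v₀, by simpa using hv₀⟩⟩
  have hpre : ¬ (G.induce ((S : Set V)ᶜ)).Preconnected := fun h => hG ⟨h⟩
  simp only [SimpleGraph.Preconnected, not_forall] at hpre
  obtain ⟨u, v, huv⟩ := hpre
  let A : Finset V := {w | ∃ h : w ∉ (S : Set V), (G.induce ((S : Set V)ᶜ)).Reachable u ⟨w, h⟩}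
  have hA : outerNbhd G A ⊆ S := by
    simp only [outerNbhd_subset_iff, A, Finset.mem_filter_univ]
    rintro i ⟨hiS, hui⟩ w hiw hwS
    exact ⟨by simpa using hwS, hui.trans (SimpleGraph.Adj.reachable (by simpa using hiw))⟩
  have huA : u.1 ∈ A := (Finset.mem_filter_univ _).2 ⟨u.2, SimpleGraph.Reachable.refl _⟩
  have hvA : v.1 ∉ A := fun h => huv ((Finset.mem_filter_univ _).1 h).2
  by_cases hle : 2 * #A ≤ Fintype.card V
  · exact ⟨A, ⟨u, huA⟩, hle, hA⟩
  · refine ⟨(A ∪ S)ᶜ, ⟨v, ?_⟩, ?_, outerNbhd_compl_union_subset hA⟩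
    · simpa only [Finset.mem_compl, Finset.mem_union, not_or] using ⟨hvA, v.2⟩
    · have hcompl := Finset.card_compl_add_card (A ∪ S)
      have hAS := Finset.card_le_card (Finset.subset_union_left (s₁ := A) (s₂ := S))
      omega

theorem exists_card_outerNbhd_le (hk : k - 1 < Fintype.card V) (hG : ¬ KConnected G k) :
    ∃ T : Finset V, T.Nonempty ∧ 2 * #T ≤ Fintype.card V ∧ #(outerNbhd G T) ≤ k - 1 := by
  classical
  simp only [KConnected, not_forall] at hG
  obtain ⟨S, hS, hdisconn⟩ := hG
  obtain ⟨T, hT, hcard, hTS⟩ := exists_outerNbhd_subset (hS.trans_lt hk) hdisconn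
  exact ⟨T, hT, hcard, (Finset.card_le_card hTS).trans hS⟩

theorem KConnected.le_minDeg (hk : k < Fintype.card V) (hG : KConnected G k) :
    k ≤ minDeg G := by
  classical
  have : Nonempty V := Fintype.card_pos_iff.1 (by omega)
  refine le_csInf (Set.range_nonempty _) ?_
  rintro _ ⟨v, rfl⟩
  by_contra! hlt
  let S : Finset V := {w | G.Adj v w}
  have hS : #S = gDeg G v := by rw [gDeg, Nat.card_eq_fintype_card, Fintype.card_subtype]
  have hvS : v ∉ S := by simp [S]
  obtain ⟨w, -, hw⟩ := Finset.exists_mem_notMem_of_card_lt_card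
    (s := insert v S) (t := Finset.univ) (by
      rw [Finset.card_univ, Finset.card_insert_of_notMem hvS]
      omega)
  simp only [Finset.mem_insert, not_or] at hw
  obtain ⟨W⟩ := (hG S (by omega)).preconnected ⟨v, by simpa using hvS⟩ ⟨w, by simpa using hw.2⟩
  cases W with
  | nil => exact hw.1 rfl
  | @cons _ x _ hvx _ => exact x.2 (Finset.mem_coe.2 ((Finset.mem_filter_univ _).2 hvx))

end Graph

/-! ### Bernoulli channels -/

theorem isProbabilityMeasure_bern {p : ℝ} (hp0 : 0 ≤ p) (hp1 : p ≤ 1) :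
    IsProbabilityMeasure (bern p) := by
  constructor
  simp only [bern, Measure.add_apply, Measure.smul_apply, measure_univ, smul_eq_mul, mul_one]
  rw [← ENNReal.ofReal_add hp0 (sub_nonneg.2 hp1), add_sub_cancel, ENNReal.ofReal_one]

theorem bern_singleton_true (p : ℝ) : bern p {true} = ENNReal.ofReal p := by
  simp [bern]

theorem bern_singleton_false (p : ℝ) : bern p {false} = ENNReal.ofReal (1 - p) := by
  simp [bern]

theorem ext_of_singleton_true {μ ν : Measure Bool} [IsProbabilityMeasure μ]
    [IsProbabilityMeasure ν] (h : μ {true} = ν {true}) : μ = ν := by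
  have hcompl : ({false} : Set Bool) = {true}ᶜ := by ext b; simp
  refine Measure.ext_of_singleton fun b => ?_
  cases b with
  | false => rw [hcompl, prob_compl_eq_one_sub (MeasurableSet.singleton _),
      prob_compl_eq_one_sub (MeasurableSet.singleton _), h]
  | true => exact h

theorem bern_mul_eq_map_and {p θ : ℝ} (hp0 : 0 ≤ p) (hp1 : p ≤ 1) (hθ0 : 0 ≤ θ) (hθ1 : θ ≤ 1) :
    bern (p * θ) = ((bern p).prod (bern θ)).map fun b => b.1 && b.2 := by
  have := isProbabilityMeasure_bern hp0 hp1
  have := isProbabilityMeasure_bern hθ0 hθ1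
  have := isProbabilityMeasure_bern (mul_nonneg hp0 hθ0) (mul_le_one₀ hp1 hθ0 hθ1)
  have hmeas : Measurable fun b : Bool × Bool => b.1 && b.2 := measurable_of_countable _
  have := Measure.isProbabilityMeasure_map (μ := (bern p).prod (bern θ)) hmeas.aemeasurable
  refine ext_of_singleton_true ?_
  have hpre : (fun b : Bool × Bool => b.1 && b.2) ⁻¹' {true} = {true} ×ˢ {true} := by
    ext ⟨a, b⟩
    simp
  rw [Measure.map_apply hmeas (MeasurableSet.singleton _), hpre, Measure.prod_prod,
    bern_singleton_true, bern_singleton_true, bern_singleton_true, ENNReal.ofReal_mul hp0]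

section Channels

variable {E : Type*} [Fintype E]

/-- The law of a family of independent `Bernoulli(p)` channels indexed by `E`. -/
abbrev chanMeasure (E : Type*) [Fintype E] (p : ℝ) : Measure (E → Bool) :=
  Measure.pi fun _ : E => bern p

theorem chanMeasure_forall_true_forall_false {p : ℝ} (hp0 : 0 ≤ p) (hp1 : p ≤ 1)
    {E₁ E₀ : Finset E} (hE : Disjoint E₁ E₀) :
    (chanMeasure E p).real {c | (∀ e ∈ E₁, c e = true) ∧ ∀ e ∈ E₀, c e = false}
      = p ^ #E₁ * (1 - p) ^ #E₀ := by
  classical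
  have := isProbabilityMeasure_bern hp0 hp1
  have hset : {c : E → Bool | (∀ e ∈ E₁, c e = true) ∧ ∀ e ∈ E₀, c e = false}
      = Set.pi Set.univ fun e => {b | (e ∈ E₁ → b = true) ∧ (e ∈ E₀ → b = false)} := by
    ext c
    simp only [Set.mem_ofPred_eq, Set.mem_univ_pi, forall_and]
  have hbern : ∀ e, (bern p {b | (e ∈ E₁ → b = true) ∧ (e ∈ E₀ → b = false)}).toReal
      = (if e ∈ E₁ then p else 1) * (if e ∈ E₀ then 1 - p else 1) := fun e => by
    by_cases h₁ : e ∈ E₁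
    · have h₀ : e ∉ E₀ := Finset.disjoint_left.1 hE h₁
      simp [h₁, h₀, bern_singleton_true, hp0]
    · by_cases h₀ : e ∈ E₀
      · simp [h₁, h₀, bern_singleton_false, hp1]
      · simp only [h₁, h₀, IsEmpty.forall_iff, and_self, Set.ofPred_true, measure_univ,
          ENNReal.toReal_one, if_false, mul_one]
  rw [hset, Measure.real, Measure.pi_pi, ENNReal.toReal_prod]
  simp_rw [hbern]
  rw [Finset.prod_mul_distrib]
  simp only [Finset.prod_ite_mem, Finset.univ_inter, Finset.prod_const]

theorem chanMeasure_mul_le {p θ : ℝ} (hp0 : 0 ≤ p) (hp1 : p ≤ 1) (hθ0 : 0 ≤ θ) (hθ1 : θ ≤ 1)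
    {A : Set (E → Bool)} (hA : IsUpperSet A) :
    chanMeasure E (p * θ) A ≤ chanMeasure E p A := by
  have := isProbabilityMeasure_bern hp0 hp1
  have := isProbabilityMeasure_bern hθ0 hθ1
  let μ : Measure (E → Bool × Bool) := Measure.pi fun _ => (bern p).prod (bern θ)
  have hand : chanMeasure E (p * θ) = μ.map fun x e => (x e).1 && (x e).2 := by
    have hmap := bern_mul_eq_map_and hp0 hp1 hθ0 hθ1
    have : IsProbabilityMeasure (((bern p).prod (bern θ)).map fun b => b.1 && b.2) :=
      hmap ▸ isProbabilityMeasure_bern (mul_nonneg hp0 hθ0) (mul_le_one₀ hp1 hθ0 hθ1)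
    rw [chanMeasure, hmap]
    exact (Measure.pi_map_pi (f := fun (_ : E) (b : Bool × Bool) => b.1 && b.2)
      fun _ => (measurable_of_countable _).aemeasurable).symm
  have hfst : chanMeasure E p = μ.map fun x e => (x e).1 := by
    have hmap : (((bern p).prod (bern θ)).map fun b : Bool × Bool => b.1) = bern p :=
      Measure.fst_prod
    have := Measure.isProbabilityMeasure_map (μ := (bern p).prod (bern θ))
      (measurable_fst (α := Bool) (β := Bool)).aemeasurable
    rw [Measure.pi_map_pi (f := fun (_ : E) (b : Bool × Bool) => b.1)
      fun _ => measurable_fst.aemeasurable, hmap]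
  rw [hand, hfst, Measure.map_apply (measurable_of_countable _) MeasurableSet.of_discrete,
    Measure.map_apply (measurable_of_countable _) MeasurableSet.of_discrete]
  exact measure_mono fun x hx => hA (fun e => Bool.and_le_left _ _) hx

theorem chanMeasure_mono {p q : ℝ} (hq0 : 0 ≤ q) (hqp : q ≤ p) (hp1 : p ≤ 1)
    {A : Set (E → Bool)} (hA : IsUpperSet A) :
    chanMeasure E q A ≤ chanMeasure E p A := by
  have hp0 := hq0.trans hqp
  have hq : p * (q / p) = q := mul_div_cancel_of_imp' fun hp => le_antisymm (hp ▸ hqp) hq0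
  simpa only [hq] using
    chanMeasure_mul_le hp0 hp1 (div_nonneg hq0 hp0) (div_le_one_of_le₀ hqp hp0) hA

end Channels

/-! ### The random graph -/

section Gon

variable {n P K : ℕ} {p : ℝ}

theorem isProbabilityMeasure_uniformKeyMeasure (hKP : K ≤ P) :
    IsProbabilityMeasure (uniformKeyMeasure P K) := by
  have := nonempty_keyRing hKP
  constructor
  rw [uniformKeyMeasure, Measure.smul_apply, Measure.count_univ, ENat.card_eq_coe_fintype_card,
    smul_eq_mul]
  exact ENNReal.inv_mul_cancel (by exact_mod_cast Fintype.card_ne_zero) (ENNReal.natCast_ne_top _)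

theorem isProbabilityMeasure_gonMeasure (hKP : K ≤ P) (hp0 : 0 ≤ p) (hp1 : p ≤ 1) :
    IsProbabilityMeasure (gonMeasure n K P p) := by
  have := isProbabilityMeasure_bern hp0 hp1
  have := isProbabilityMeasure_uniformKeyMeasure hKP
  unfold gonMeasure
  infer_instance

theorem pi_uniformKeyMeasure_singleton (hKP : K ≤ P) (σ : Fin n → KeyRing P K) :
    (Measure.pi fun _ : Fin n => uniformKeyMeasure P K) {σ}
      = (Fintype.card (Fin n → KeyRing P K) : ℝ≥0∞)⁻¹ := by
  have := isProbabilityMeasure_uniformKeyMeasure hKP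
  rw [Measure.pi_singleton]
  simp [uniformKeyMeasure, Fintype.card_pi, ENNReal.inv_pow]

theorem gonMeasure_eq_expect (hKP : K ≤ P) (hp0 : 0 ≤ p) (hp1 : p ≤ 1)
    (A : Set (GonSpace n K P)) :
    (gonMeasure n K P p).real A
      = 𝔼 σ : Fin n → KeyRing P K, (chanMeasure (Sym2 (Fin n)) p).real {c | (σ, c) ∈ A} := by
  have := isProbabilityMeasure_bern hp0 hp1
  have := isProbabilityMeasure_uniformKeyMeasure hKP
  rw [Measure.real, gonMeasure, Measure.prod_apply MeasurableSet.of_discrete, lintegral_fintype,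
    ENNReal.toReal_sum fun _ _ => ENNReal.mul_ne_top (measure_ne_top _ _) (measure_ne_top _ _),
    Fintype.expect_eq_sum_div_card, Finset.sum_div]
  refine Finset.sum_congr rfl fun σ _ => ?_
  rw [ENNReal.toReal_mul, pi_uniformKeyMeasure_singleton hKP, ENNReal.toReal_inv,
    ENNReal.toReal_natCast, div_eq_mul_inv]
  rfl

theorem gonGraph_mono (σ : Fin n → KeyRing P K) {c d : Sym2 (Fin n) → Bool} (hcd : c ≤ d) :
    gonGraph (σ, c) ≤ gonGraph (σ, d) := fun i j ⟨hij, hkey, hc⟩ =>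
  ⟨hij, hkey, Bool.eq_true_of_true_le (hc ▸ hcd s(i, j))⟩

theorem gonMeasure_mono {q : ℝ} (hKP : K ≤ P) (hq0 : 0 ≤ q) (hqp : q ≤ p) (hp1 : p ≤ 1)
    {A : Set (SimpleGraph (Fin n))} (hA : IsUpperSet A) :
    (gonMeasure n K P q).real {ω | gonGraph ω ∈ A}
      ≤ (gonMeasure n K P p).real {ω | gonGraph ω ∈ A} := by
  have := isProbabilityMeasure_bern (hq0.trans hqp) hp1
  rw [gonMeasure_eq_expect hKP hq0 (hqp.trans hp1), gonMeasure_eq_expect hKP (hq0.trans hqp) hp1]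
  exact Finset.expect_le_expect fun σ _ => ENNReal.toReal_mono (measure_ne_top _ _) <|
    chanMeasure_mono hq0 hqp hp1 fun c d hcd hc => hA (gonGraph_mono σ hcd) hc

end Gon

/-! ### Revealing the neighbourhood of a set -/

section CrossEdges

variable {V : Type*} [DecidableEq V] {S T W : Finset V} {N N' : V → Finset V}

/-- The pairs joining a vertex `v ∈ W` to a vertex of its list `N v`. -/
def crossEdges (W : Finset V) (N : V → Finset V) : Finset (Sym2 V) :=
  W.biUnion fun v => (N v).image fun i => s(i, v)

theorem forall_mem_crossEdges {f : Sym2 V → Prop} :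
    (∀ e ∈ crossEdges W N, f e) ↔ ∀ v ∈ W, ∀ i ∈ N v, f s(i, v) := by
  simp only [crossEdges, Finset.mem_biUnion, Finset.mem_image]
  exact ⟨fun h v hv i hi => h _ ⟨v, hv, i, hi, rfl⟩,
    fun h e ⟨v, hv, i, hi, he⟩ => he ▸ h v hv i hi⟩

theorem disjoint_image_edges {A B : Finset V} {v w : V} (hA : A ⊆ T) (hw : w ∉ T) (hvw : v ≠ w) :
    Disjoint (A.image fun i => s(i, v)) (B.image fun i => s(i, w)) := by
  rw [Finset.disjoint_left]
  simp only [Finset.mem_image, not_exists, not_and]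
  rintro _ ⟨i, hi, rfl⟩ j - hij
  rcases Sym2.eq_iff.1 hij with ⟨-, h⟩ | ⟨-, h⟩
  · exact hvw h.symm
  · exact hw (h ▸ hA hi)

theorem card_crossEdges (hWT : Disjoint W T) (hN : ∀ v ∈ W, N v ⊆ T) :
    #(crossEdges W N) = ∑ v ∈ W, #(N v) := by
  rw [crossEdges, Finset.card_biUnion fun v hv w hw hvw =>
    disjoint_image_edges (hN v hv) (Finset.disjoint_left.1 hWT hw) hvw]
  exact Finset.sum_congr rfl fun v _ =>
    Finset.card_image_of_injective _ fun _ _ => Sym2.congr_left.1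

theorem disjoint_crossEdges (hSW : Disjoint S W) (hWT : Disjoint W T) (hN : ∀ v ∈ S, N v ⊆ T) :
    Disjoint (crossEdges S N) (crossEdges W N') := by
  simp only [crossEdges, Finset.disjoint_biUnion_left, Finset.disjoint_biUnion_right]
  exact fun w hw v hv => disjoint_image_edges (hN v hv) (Finset.disjoint_left.1 hWT hw)
    (Finset.disjoint_left.1 hSW hv <| · ▸ hw)

end CrossEdges

theorem chanMeasure_exists_true_forall_false_le {V : Type*} [Fintype V] {p : ℝ} (hp0 : 0 ≤ p)
    (hp1 : p ≤ 1) {S T W : Finset V} {N : V → Finset V} (hST : Disjoint S T)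
    (hWT : Disjoint W T) (hSW : Disjoint S W) (hN : ∀ v, N v ⊆ T) :
    (chanMeasure (Sym2 V) p).real {c | (∀ v ∈ S, ∃ i ∈ N v, c s(i, v) = true) ∧
        ∀ v ∈ W, ∀ i ∈ N v, c s(i, v) = false}
      ≤ (∏ v ∈ S, p * #(N v)) * ∏ v ∈ W, (1 - p) ^ #(N v) := by
  classical
  have := isProbabilityMeasure_bern hp0 hp1
  let Φ : Finset (V → V) := Fintype.piFinset fun v => if v ∈ S then N v else {v}
  let R : (V → V) → Set (Sym2 V → Bool) := fun φ =>
    {c | (∀ e ∈ crossEdges S fun v => {φ v}, c e = true) ∧ ∀ e ∈ crossEdges W N, c e = false}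
  have hcover : {c : Sym2 V → Bool | (∀ v ∈ S, ∃ i ∈ N v, c s(i, v) = true) ∧
      ∀ v ∈ W, ∀ i ∈ N v, c s(i, v) = false} ⊆ ⋃ φ ∈ Φ, R φ := fun c ⟨hon, hoff⟩ => by
    have hchoice : ∀ v, ∃ i ∈ (if v ∈ S then N v else {v}), v ∈ S → c s(i, v) = true := fun v => by
      by_cases hv : v ∈ S
      · simpa only [hv, if_true, true_imp_iff] using hon v hv
      · exact ⟨v, by simp only [hv, if_false, Finset.mem_singleton], fun h => absurd h hv⟩
    choose φ hφ hc using hchoice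
    refine Set.mem_biUnion (Fintype.mem_piFinset.2 hφ) ⟨?_, forall_mem_crossEdges.2 hoff⟩
    simpa only [forall_mem_crossEdges, Finset.mem_singleton, forall_eq] using hc
  have hR : ∀ φ ∈ Φ, (chanMeasure (Sym2 V) p).real (R φ)
      = p ^ #S * ∏ v ∈ W, (1 - p) ^ #(N v) := fun φ hφ => by
    have hφT : ∀ v ∈ S, {φ v} ⊆ T := fun v hv => by
      have := Fintype.mem_piFinset.1 hφ v
      rw [if_pos hv] at this
      exact Finset.singleton_subset_iff.2 (hN v this)
    rw [chanMeasure_forall_true_forall_false hp0 hp1 (disjoint_crossEdges hSW hWT hφT),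
      card_crossEdges hST hφT, card_crossEdges hWT fun v _ => hN v, Finset.prod_pow_eq_pow_sum]
    simp only [Finset.card_singleton, Finset.sum_const, smul_eq_mul, mul_one]
  have hΦ : #Φ = ∏ v ∈ S, #(N v) := by
    simp only [Φ, Fintype.card_piFinset, apply_ite Finset.card, Finset.card_singleton,
      Finset.prod_ite_mem, Finset.univ_inter]
  calc _ ≤ ∑ φ ∈ Φ, (chanMeasure (Sym2 V) p).real (R φ) :=
        (measureReal_mono hcover (measure_ne_top _ _)).trans (measureReal_biUnion_finset_le _ _)
    _ = _ := by
        rw [Finset.sum_congr rfl hR, Finset.sum_const, hΦ, nsmul_eq_mul, Finset.prod_mul_distrib,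
          Finset.prod_const, Nat.cast_prod]
        ring

section NeighbourhoodLaw

variable {n P K : ℕ} {p : ℝ}

theorem expect_mul_prod_linkedNodes_le {ι : Type*} [Fintype ι] [DecidableEq ι] (hKP : K ≤ P)
    (hp0 : 0 ≤ p) (hp1 : p ≤ 1) {S T W : Finset ι} (hST : Disjoint S T) (hWT : Disjoint W T)
    (hSW : Disjoint S W) {A : (ι → KeyRing P K) → ℝ} (hA0 : ∀ σ, 0 ≤ A σ)
    (hA : DependsOn A (T : Set ι)) :
    𝔼 σ, A σ * ((∏ v ∈ S, p * #(linkedNodes σ T (σ v))) *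
        ∏ v ∈ W, (1 - p) ^ #(linkedNodes σ T (σ v)))
      ≤ (#T * (p * ((K : ℝ) ^ 2 / P))) ^ #S * 𝔼 σ, A σ * avoidProb p σ T ^ #W := by
  have := nonempty_keyRing hKP
  let g : ι → (ι → KeyRing P K) → KeyRing P K → ℝ := fun v σ s =>
    if v ∈ S then p * #(linkedNodes σ T s) else (1 - p) ^ #(linkedNodes σ T s)
  have hgS : ∀ v ∈ S, ∀ σ s, g v σ s = p * #(linkedNodes σ T s) := fun v hv σ s => if_pos hv
  have hgW : ∀ v ∈ W, ∀ σ s, g v σ s = (1 - p) ^ #(linkedNodes σ T s) := fun v hv σ s =>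
    if_neg (Finset.disjoint_right.1 hSW hv)
  have hg : ∀ v, DependsOn (g v) (T : Set ι) := fun v σ τ hστ => by
    simp only [g, dependsOn_linkedNodes T hστ]
  calc _ = 𝔼 σ, A σ * ∏ v ∈ S ∪ W, g v σ (σ v) := by
        refine Finset.expect_congr rfl fun σ _ => ?_
        rw [Finset.prod_union hSW, Finset.prod_congr rfl fun v hv => hgS v hv σ (σ v),
          Finset.prod_congr (s₁ := W) rfl fun v hv => hgW v hv σ (σ v)]
    _ = 𝔼 σ, A σ * ∏ v ∈ S ∪ W, 𝔼 s, g v σ s :=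
        expect_mul_prod_apply (Finset.disjoint_union_left.2 ⟨hST, hWT⟩) hA hg
    _ ≤ 𝔼 σ, (#T * (p * ((K : ℝ) ^ 2 / P))) ^ #S * (A σ * avoidProb p σ T ^ #W) := by
        refine Finset.expect_le_expect fun σ _ => ?_
        have hS : ∏ v ∈ S, 𝔼 s, g v σ s ≤ (#T * (p * ((K : ℝ) ^ 2 / P))) ^ #S := by
          rw [← Finset.prod_const]
          refine Finset.prod_le_prod (fun v hv => ?_) fun v hv => ?_ <;> simp only [hgS v hv]
          · exact Finset.expect_nonneg fun s _ => by positivity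
          · rw [← Finset.mul_expect, mul_left_comm]
            exact mul_le_mul_of_nonneg_left (expect_card_linkedNodes_le hKP σ T) hp0
        have hW : ∏ v ∈ W, 𝔼 s, g v σ s = avoidProb p σ T ^ #W :=
          Finset.prod_eq_pow_card fun v hv => by simp only [hgW v hv, avoidProb]
        rw [Finset.prod_union hSW, hW, mul_left_comm]
        exact mul_le_mul_of_nonneg_right hS
          (mul_nonneg (hA0 σ) (pow_nonneg (avoidProb_nonneg hp1 _ _) _))
    _ = _ := by rw [Finset.mul_expect]

variable {S T : Finset (Fin n)}

theorem chanMeasure_outerNbhd_eq_le (hp0 : 0 ≤ p) (hp1 : p ≤ 1) (σ : Fin n → KeyRing P K)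
    (hST : Disjoint S T) :
    (chanMeasure (Sym2 (Fin n)) p).real {c | outerNbhd (gonGraph (σ, c)) T = S}
      ≤ (∏ v ∈ S, p * #(linkedNodes σ T (σ v))) *
        ∏ v ∈ (T ∪ S)ᶜ, (1 - p) ^ #(linkedNodes σ T (σ v)) := by
  have := isProbabilityMeasure_bern hp0 hp1
  refine (measureReal_mono ?_ (measure_ne_top _ _)).trans <|
    chanMeasure_exists_true_forall_false_le hp0 hp1 hST
      (disjoint_compl_left.mono_right Finset.subset_union_left)
      (disjoint_compl_right.mono_left Finset.subset_union_right)
      fun v => Finset.filter_subset _ _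
  rintro c rfl
  refine ⟨fun v hv => ?_, fun v hv i hi => ?_⟩
  · obtain ⟨-, i, hiT, -, hkey, hc⟩ := mem_outerNbhd.1 hv
    exact ⟨i, Finset.mem_filter.2 ⟨hiT, hkey⟩, hc⟩
  · simp only [Finset.mem_compl, Finset.mem_union, not_or] at hv
    obtain ⟨hiT, hkey⟩ := Finset.mem_filter.1 hi
    refine Bool.eq_false_of_not_eq_true fun hc => hv.2 (mem_outerNbhd.2 ⟨hv.1, i, hiT, ?_⟩)
    exact ⟨ne_of_mem_of_not_mem hiT hv.1, hkey, hc⟩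

open Classical in
theorem gonMeasure_outerNbhd_eq_le (hKP : K ≤ P) (hp0 : 0 ≤ p) (hp1 : p ≤ 1)
    (hST : Disjoint S T) {E : (Fin n → KeyRing P K) → Prop}
    (hE : DependsOn E (T : Set (Fin n))) :
    (gonMeasure n K P p).real {ω | E ω.1 ∧ outerNbhd (gonGraph ω) T = S}
      ≤ (#T * (p * ((K : ℝ) ^ 2 / P))) ^ #S *
        𝔼 σ, (if E σ then 1 else 0) * avoidProb p σ T ^ (n - #T - #S) := by
  let A : (Fin n → KeyRing P K) → ℝ := fun σ => if E σ then 1 else 0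
  have hA : DependsOn A (T : Set (Fin n)) := fun σ τ hστ => by simp only [A, hE hστ]
  have hcard : #(T ∪ S)ᶜ = n - #T - #S := by
    rw [Finset.card_compl, Fintype.card_fin, Finset.card_union_of_disjoint hST.symm, Nat.sub_sub]
  rw [gonMeasure_eq_expect hKP hp0 hp1, ← hcard]
  refine le_trans (Finset.expect_le_expect fun σ _ => ?_) <|
    expect_mul_prod_linkedNodes_le hKP hp0 hp1 hST
      (disjoint_compl_left.mono_right Finset.subset_union_left)
      (disjoint_compl_right.mono_left Finset.subset_union_right)
      (fun σ => ite_nonneg zero_le_one le_rfl : ∀ σ, 0 ≤ A σ) hA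
  by_cases hσ : E σ
  · simpa only [hσ, A, true_and, if_true, one_mul, Set.mem_ofPred_eq]
      using chanMeasure_outerNbhd_eq_le hp0 hp1 σ hST
  · simp [hσ]

end NeighbourhoodLaw

/-! ### The union bound -/

section UnionBound

variable {V : Type*} [Fintype V] {k : ℕ}

theorem sum_pow_card_le {y : ℝ} (hy0 : 0 ≤ y) (hy : 1 ≤ Fintype.card V * y) :
    ∑ S : Finset V with #S < k, y ^ #S ≤ k * (Fintype.card V * y) ^ (k - 1) := by
  have hfiber : ∀ l ∈ Finset.range k, ∑ S : Finset V with #S = l, y ^ #S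
      ≤ (Fintype.card V * y) ^ (k - 1) := fun l hl => by
    calc ∑ S : Finset V with #S = l, y ^ #S
        = (Fintype.card V).choose l * y ^ l := by
          rw [Finset.sum_congr rfl fun S hS => by rw [(Finset.mem_filter.1 hS).2],
            Finset.sum_const, Finset.univ_filter_card_eq, Finset.card_powersetCard,
            Finset.card_univ, nsmul_eq_mul]
      _ ≤ (Fintype.card V : ℝ) ^ l * y ^ l :=
          mul_le_mul_of_nonneg_right (mod_cast Nat.choose_le_pow _ l) (pow_nonneg hy0 _)
      _ = (Fintype.card V * y) ^ l := (mul_pow _ _ _).symm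
      _ ≤ _ := pow_le_pow_right₀ hy (Nat.le_sub_one_of_lt (Finset.mem_range.1 hl))
  calc ∑ S : Finset V with #S < k, y ^ #S
      = ∑ l ∈ Finset.range k, ∑ S : Finset V with #S = l, y ^ #S := by
        rw [← Finset.sum_fiberwise_of_maps_to (g := Finset.card) (t := Finset.range k) fun S hS =>
          Finset.mem_range.2 (Finset.mem_filter.1 hS).2]
        refine Finset.sum_congr rfl fun l hl => ?_
        rw [Finset.filter_filter]
        refine Finset.sum_congr (Finset.filter_congr fun S _ => ?_) fun _ _ => rfl
        exact and_iff_right_of_imp fun h => h ▸ Finset.mem_range.1 hl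
    _ ≤ ∑ _l ∈ Finset.range k, (Fintype.card V * y) ^ (k - 1) := Finset.sum_le_sum hfiber
    _ = _ := by rw [Finset.sum_const, Finset.card_range, nsmul_eq_mul]

theorem sum_nonempty_two_mul_card_le (f : ℕ → ℝ) :
    ∑ T : Finset V with T.Nonempty ∧ 2 * #T ≤ Fintype.card V, f #T
      = ∑ r ∈ Finset.Icc 1 (Fintype.card V / 2), (Fintype.card V).choose r * f r := by
  have hmem : ∀ T : Finset V, T.Nonempty ∧ 2 * #T ≤ Fintype.card V ↔
      #T ∈ Finset.Icc 1 (Fintype.card V / 2) := fun T => by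
    rw [Finset.mem_Icc, Nat.le_div_iff_mul_le two_pos, mul_comm, Nat.one_le_iff_ne_zero,
      Finset.card_ne_zero]
  rw [← Finset.sum_fiberwise_of_maps_to (g := Finset.card) fun T hT =>
    (hmem T).1 (Finset.mem_filter.1 hT).2]
  refine Finset.sum_congr rfl fun r hr => ?_
  have hfiber : ({T | T.Nonempty ∧ 2 * #T ≤ Fintype.card V} : Finset (Finset V)).filter (#· = r)
      = Finset.powersetCard r Finset.univ := by
    rw [Finset.filter_filter, ← Finset.univ_filter_card_eq]
    exact Finset.filter_congr fun T _ => and_iff_right_of_imp fun h => (hmem T).2 (h ▸ hr)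
  rw [hfiber, Finset.sum_congr rfl fun T hT => by rw [(Finset.mem_powersetCard.1 hT).2],
    Finset.sum_const, Finset.card_powersetCard, Finset.card_univ, nsmul_eq_mul]

variable {n P K : ℕ} {p : ℝ}

open Classical in
theorem gonMeasure_outerNbhd_eq_le_of_card_lt (hKP : K ≤ P) (hp0 : 0 ≤ p) (hp1 : p ≤ 1)
    {S T : Finset (Fin n)} (hS : #S < k) {E : (Fin n → KeyRing P K) → Prop}
    (hE : DependsOn E (T : Set (Fin n))) :
    (gonMeasure n K P p).real {ω | E ω.1 ∧ outerNbhd (gonGraph ω) T = S}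
      ≤ (#T * (p * ((K : ℝ) ^ 2 / P))) ^ #S *
        𝔼 σ, (if E σ then 1 else 0) * avoidProb p σ T ^ (n - #T - k) := by
  by_cases hST : Disjoint S T
  · refine (gonMeasure_outerNbhd_eq_le hKP hp0 hp1 hST hE).trans ?_
    refine mul_le_mul_of_nonneg_left (Finset.expect_le_expect fun σ _ => ?_) (by positivity)
    refine mul_le_mul_of_nonneg_left ?_ (ite_nonneg zero_le_one le_rfl)
    exact pow_le_pow_of_le_one (avoidProb_nonneg hp1 _ _) (avoidProb_le_one hKP hp0 hp1 _ _)
      (Nat.sub_le_sub_left hS.le _)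
  · have hempty : {ω : GonSpace n K P | E ω.1 ∧ outerNbhd (gonGraph ω) T = S} = ∅ :=
      Set.eq_empty_of_forall_notMem fun ω ⟨_, hω⟩ => hST <| Finset.disjoint_left.2 fun v hv =>
        (mem_outerNbhd.1 (hω ▸ hv)).1
    rw [hempty, measureReal_empty]
    exact mul_nonneg (by positivity) <| Finset.expect_nonneg fun σ _ =>
      mul_nonneg (ite_nonneg zero_le_one le_rfl) (pow_nonneg (avoidProb_nonneg hp1 _ _) _)

open Classical in
theorem gonMeasure_card_outerNbhd_lt_le (hKP : K ≤ P) (hp0 : 0 ≤ p) (hp1 : p ≤ 1)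
    (hq : 1 ≤ n * (p * ((K : ℝ) ^ 2 / P))) {T : Finset (Fin n)} (hT : T.Nonempty)
    {E : (Fin n → KeyRing P K) → Prop} (hE : DependsOn E (T : Set (Fin n))) :
    (gonMeasure n K P p).real {ω | E ω.1 ∧ #(outerNbhd (gonGraph ω) T) < k}
      ≤ k * (#T * (n * (p * ((K : ℝ) ^ 2 / P)))) ^ (k - 1) *
        𝔼 σ, (if E σ then 1 else 0) * avoidProb p σ T ^ (n - #T - k) := by
  have := isProbabilityMeasure_gonMeasure (n := n) hKP hp0 hp1
  set q : ℝ := p * ((K : ℝ) ^ 2 / P)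
  set X : ℝ := 𝔼 σ : Fin n → KeyRing P K,
    (if E σ then 1 else 0) * avoidProb p σ T ^ (n - #T - k)
  have hX0 : 0 ≤ X := Finset.expect_nonneg fun σ _ =>
    mul_nonneg (ite_nonneg zero_le_one le_rfl) (pow_nonneg (avoidProb_nonneg hp1 _ _) _)
  have hcover : {ω : GonSpace n K P | E ω.1 ∧ #(outerNbhd (gonGraph ω) T) < k}
      ⊆ ⋃ S ∈ ({S | #S < k} : Finset (Finset (Fin n))),
        {ω | E ω.1 ∧ outerNbhd (gonGraph ω) T = S} := fun ω ⟨hEω, hω⟩ =>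
    Set.mem_biUnion (Finset.mem_filter_univ _ |>.2 hω) ⟨hEω, rfl⟩
  have hcount : ∑ S : Finset (Fin n) with #S < k, (#T * q) ^ #S
      ≤ k * (#T * (n * q)) ^ (k - 1) := by
    have hsum := sum_pow_card_le (V := Fin n) (k := k) (y := #T * q) (by positivity)
    rw [Fintype.card_fin, mul_left_comm] at hsum
    exact hsum (one_le_mul_of_one_le_of_one_le (mod_cast hT.card_pos) hq)
  calc _ ≤ ∑ S : Finset (Fin n) with #S < k, (#T * q) ^ #S * X :=
        ((measureReal_mono hcover (measure_ne_top _ _)).trans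
          (measureReal_biUnion_finset_le _ _)).trans <| Finset.sum_le_sum fun S hS =>
            gonMeasure_outerNbhd_eq_le_of_card_lt hKP hp0 hp1 (Finset.mem_filter.1 hS).2 hE
    _ ≤ k * (#T * (n * q)) ^ (k - 1) * X := by
        rw [← Finset.sum_mul]
        exact mul_le_mul_of_nonneg_right hcount hX0

open Classical in
theorem gonMeasure_not_kConnected_le (hKP : K ≤ P) (hp0 : 0 ≤ p) (hp1 : p ≤ 1) (hk : 1 ≤ k)
    (hkn : k ≤ n) (hq : 1 ≤ n * (p * ((K : ℝ) ^ 2 / P)))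
    {E : Finset (Fin n) → (Fin n → KeyRing P K) → Prop}
    (hE : ∀ T : Finset (Fin n), DependsOn (E T) (T : Set (Fin n))) {e : ℕ → ℝ}
    (he : ∀ T : Finset (Fin n), T.Nonempty → 2 * #T ≤ n →
      𝔼 σ, (if E T σ then 1 else 0) * avoidProb p σ T ^ (n - #T - k) ≤ e #T) :
    (gonMeasure n K P p).real {ω | ¬ KConnected (gonGraph ω) k}
      ≤ 𝔼 σ : Fin n → KeyRing P K, (if ∀ T, E T σ then 0 else 1)
        + ∑ r ∈ Finset.Icc 1 (n / 2),
          n.choose r * (k * (r * (n * (p * ((K : ℝ) ^ 2 / P)))) ^ (k - 1) * e r) := by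
  have := isProbabilityMeasure_gonMeasure (n := n) hKP hp0 hp1
  have := isProbabilityMeasure_bern hp0 hp1
  set q : ℝ := p * ((K : ℝ) ^ 2 / P)
  have hcover : {ω : GonSpace n K P | ¬ KConnected (gonGraph ω) k}
      ⊆ {ω | ¬ ∀ T, E T ω.1} ∪
        ⋃ T ∈ ({T | T.Nonempty ∧ 2 * #T ≤ Fintype.card (Fin n)} : Finset (Finset (Fin n))),
          {ω | E T ω.1 ∧ #(outerNbhd (gonGraph ω) T) < k} := fun ω hω => by
    by_cases hEω : ∀ T, E T ω.1
    · have hcard : k - 1 < Fintype.card (Fin n) := by rw [Fintype.card_fin]; omega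
      obtain ⟨T, hT, hTn, hTk⟩ := exists_card_outerNbhd_le hcard hω
      exact Or.inr <| Set.mem_biUnion (Finset.mem_filter_univ _ |>.2 ⟨hT, hTn⟩) ⟨hEω T, by omega⟩
    · exact Or.inl hEω
  have hbad : (gonMeasure n K P p).real {ω | ¬ ∀ T, E T ω.1}
      = 𝔼 σ : Fin n → KeyRing P K, (if ∀ T, E T σ then 0 else 1) := by
    rw [gonMeasure_eq_expect hKP hp0 hp1]
    refine Finset.expect_congr rfl fun σ _ => ?_
    by_cases h : ∀ T, E T σ
    · simp [h]
    · simp only [Set.mem_ofPred_eq, h, not_false_eq_true, if_false, Set.ofPred_true,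
        probReal_univ]
  have hT : ∀ T : Finset (Fin n), T.Nonempty → 2 * #T ≤ n →
      (gonMeasure n K P p).real {ω | E T ω.1 ∧ #(outerNbhd (gonGraph ω) T) < k}
        ≤ k * (#T * (n * q)) ^ (k - 1) * e #T := fun T hT hTn =>
    (gonMeasure_card_outerNbhd_lt_le hKP hp0 hp1 hq hT (hE T)).trans <|
      mul_le_mul_of_nonneg_left (he T hT hTn) (by positivity)
  refine ((measureReal_mono hcover (measure_ne_top _ _)).trans (measureReal_union_le _ _)).trans <|
    add_le_add hbad.le <| (measureReal_biUnion_finset_le _ _).trans ?_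
  have hsum := sum_nonempty_two_mul_card_le (V := Fin n)
    fun r => k * (r * (n * q)) ^ (k - 1) * e r
  simp only [Fintype.card_fin] at hsum ⊢
  rw [← hsum]
  refine Finset.sum_le_sum fun T h => ?_
  obtain ⟨hne, hle⟩ := (Finset.mem_filter_univ T).1 h
  exact hT T hne hle

end UnionBound

/-! ### Expansion of the key rings -/

section KeyExpanding

variable {ι : Type*} {K P : ℕ} {ε : ℝ}

/-- Expansion of the key rings on a node set `T`: every `B ⊆ T` whose rings could fill at most
an `ε`-fraction of the key pool has at most `K * #B / 64` repeated keys. -/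
def KeyExpanding (ε : ℝ) (T : Finset ι) (σ : ι → KeyRing P K) : Prop :=
  ∀ B ⊆ T, (K : ℝ) * #B ≤ ε * P → 64 * repeatedKeys σ B ≤ K * #B

theorem dependsOn_keyExpanding (ε : ℝ) (T : Finset ι) :
    DependsOn (KeyExpanding ε T : (ι → KeyRing P K) → Prop) (T : Set ι) := by
  intro σ τ h
  have hB : ∀ B ⊆ T, repeatedKeys σ B = repeatedKeys τ B := fun B hB => by
    simp only [repeatedKeys, dependsOn_keyUnion B fun i hi => h i (hB hi)]
  simp only [KeyExpanding, eq_iff_iff]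
  exact forall₂_congr fun B hBT => by rw [hB B hBT]

theorem KeyExpanding.mul_card_le {T B : Finset ι} {σ : ι → KeyRing P K}
    (hσ : KeyExpanding ε T σ) (hBT : B ⊆ T) (hB : (K : ℝ) * #B ≤ ε * P) :
    63 / 64 * ((K : ℝ) * #B) ≤ #(keyUnion σ B) := by
  have hrep : (64 : ℝ) * repeatedKeys σ B ≤ K * #B := by exact_mod_cast hσ B hBT hB
  have hadd : (#(keyUnion σ B) : ℝ) + repeatedKeys σ B = K * #B := by
    exact_mod_cast card_keyUnion_add_repeatedKeys σ B
  linarith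

theorem KeyExpanding.exp_keyUnion_le {T B : Finset ι} {σ : ι → KeyRing P K}
    (hσ : KeyExpanding ε T σ) (hBT : B ⊆ T) (hB : (K : ℝ) * #B ≤ ε * P) :
    Real.exp (-(K / P * #(keyUnion σ B))) ≤ Real.exp (-(63 / 64 * ((K : ℝ) ^ 2 / P))) ^ #B := by
  rw [← Real.exp_nat_mul]
  refine Real.exp_le_exp.2 ?_
  calc -((K : ℝ) / P * #(keyUnion σ B)) ≤ -(K / P * (63 / 64 * (K * #B))) := by
        gcongr
        exact hσ.mul_card_le hBT hB
    _ = #B * -(63 / 64 * ((K : ℝ) ^ 2 / P)) := by ring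

theorem KeyExpanding.mul_le_card_keyUnion {T B : Finset ι} {σ : ι → KeyRing P K}
    (hσ : KeyExpanding ε T σ) (hBT : B ⊆ T) (hK : 0 < K) (hKε : K ≤ ε * P) (hB : ε * P < K * #B) :
    63 / 128 * (ε * P) ≤ #(keyUnion σ B) := by
  have hK' : (0 : ℝ) < K := by exact_mod_cast hK
  set b : ℕ := ⌊ε * P / K⌋₊
  have hb1 : (1 : ℝ) ≤ b := by
    exact_mod_cast (Nat.one_le_floor_iff _).2 ((one_le_div hK').2 hKε)
  have hbP : (K : ℝ) * b ≤ ε * P :=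
    (le_div_iff₀' hK').1 (Nat.floor_le (div_nonneg (hK'.le.trans hKε) hK'.le))
  have hhalf : ε * P ≤ 2 * (K * b) := by
    have : ε * P < (b + 1) * K := (div_lt_iff₀ hK').1 (Nat.lt_floor_add_one _)
    nlinarith
  have hbB : b ≤ #B := Nat.floor_le_of_le ((div_le_iff₀' hK').2 hB.le)
  obtain ⟨B', hB', hcard⟩ := Finset.exists_subset_card_eq hbB
  rw [← hcard] at hbP hhalf
  calc 63 / 128 * (ε * P) ≤ 63 / 64 * (K * #B') := by linarith
    _ ≤ #(keyUnion σ B') := hσ.mul_card_le (hB'.trans hBT) hbP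
    _ ≤ #(keyUnion σ B) := by
        gcongr
        exact keyUnion_mono σ hB'

variable [Fintype ι] [DecidableEq ι]

theorem expect_le_repeatedKeys_le (hKP : K ≤ P) {z : ℝ} (hz : 1 ≤ z) (B : Finset ι) (a : ℝ) :
    𝔼 σ : ι → KeyRing P K, (if a ≤ repeatedKeys σ B then (1 : ℝ) else 0)
      ≤ Real.exp ((z - 1) * ((K : ℝ) ^ 2 / P) * (#B : ℝ) ^ 2 - a * Real.log z) := by
  have hz0 : 0 < z := by linarith
  have hmarkov : ∀ σ : ι → KeyRing P K, (if a ≤ repeatedKeys σ B then (1 : ℝ) else 0)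
      ≤ Real.exp (-(a * Real.log z)) * z ^ repeatedKeys σ B := by
    intro σ
    split_ifs with ha
    · rw [← Real.exp_log (pow_pos hz0 _), Real.log_pow, ← Real.exp_add, Real.one_le_exp_iff]
      linarith [mul_le_mul_of_nonneg_right ha (Real.log_nonneg hz)]
    · positivity
  calc 𝔼 σ : ι → KeyRing P K, (if a ≤ repeatedKeys σ B then (1 : ℝ) else 0)
      ≤ 𝔼 σ : ι → KeyRing P K, Real.exp (-(a * Real.log z)) * z ^ repeatedKeys σ B :=
        Finset.expect_le_expect fun σ _ => hmarkov σ
    _ = Real.exp (-(a * Real.log z)) * 𝔼 σ : ι → KeyRing P K, z ^ repeatedKeys σ B := by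
        rw [Finset.mul_expect]
    _ ≤ Real.exp (-(a * Real.log z))
          * Real.exp ((z - 1) * ((K : ℝ) ^ 2 / P) * (#B : ℝ) ^ 2) := by
        gcongr
        exact expect_pow_repeatedKeys_le hKP hz B
    _ = _ := by rw [← Real.exp_add, neg_add_eq_sub]

theorem expect_lt_mul_repeatedKeys_le (hKP : K ≤ P) (hK : 0 < K) {B : Finset ι}
    (hB : B.Nonempty) (hBP : (K : ℝ) * #B ≤ P) :
    𝔼 σ : ι → KeyRing P K, (if K * #B < 64 * repeatedKeys σ B then (1 : ℝ) else 0)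
      ≤ Real.exp (K * #B - K * #B / 64 * Real.log (P / (K * #B))) := by
  have : (0 : ℝ) < #B := by exact_mod_cast hB.card_pos
  have : (0 : ℝ) < K := by exact_mod_cast hK
  have hP : (0 : ℝ) < P := by exact_mod_cast hK.trans_le hKP
  set z : ℝ := P / (K * #B) with hz
  have hz1 : 1 ≤ z := (one_le_div (by positivity)).2 hBP
  have hzx : z * ((K : ℝ) ^ 2 / P) * (#B : ℝ) ^ 2 = K * #B := by
    rw [hz]
    field_simp
  calc 𝔼 σ : ι → KeyRing P K, (if K * #B < 64 * repeatedKeys σ B then (1 : ℝ) else 0)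
      ≤ 𝔼 σ : ι → KeyRing P K,
          (if (K : ℝ) * #B / 64 ≤ repeatedKeys σ B then (1 : ℝ) else 0) := by
        refine Finset.expect_le_expect fun σ _ => ?_
        split_ifs with hlt hle
        · exact le_rfl
        · have : (K : ℝ) * #B < 64 * repeatedKeys σ B := by exact_mod_cast hlt
          exact absurd (by linarith) hle
        all_goals norm_num
    _ ≤ Real.exp ((z - 1) * ((K : ℝ) ^ 2 / P) * (#B : ℝ) ^ 2 - K * #B / 64 * Real.log z) :=
        expect_le_repeatedKeys_le hKP hz1 B _
    _ ≤ _ := by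
        have : 0 ≤ ((K : ℝ) ^ 2 / P) * (#B : ℝ) ^ 2 := by positivity
        exact Real.exp_le_exp.2 (by linarith)

end KeyExpanding

theorem choose_le_exp_mul_div_pow (n : ℕ) {b : ℕ} (hb : 0 < b) :
    (n.choose b : ℝ) ≤ (Real.exp 1 * (n / b)) ^ b := by
  have hb' : (0 : ℝ) < b := by exact_mod_cast hb
  calc (n.choose b : ℝ) ≤ (n : ℝ) ^ b / b.factorial := Nat.choose_le_pow_div b n
    _ = (n / b : ℝ) ^ b * ((b : ℝ) ^ b / b.factorial) := by
        rw [div_pow]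
        field_simp
    _ ≤ (n / b : ℝ) ^ b * Real.exp b := by
        gcongr
        exact Real.pow_div_factorial_le_exp _ hb'.le _
    _ = (Real.exp 1 * (n / b)) ^ b := by
        rw [mul_pow, ← Real.exp_nat_mul, mul_one, mul_comm]

theorem choose_mul_exp_sub_mul_log_le {n b : ℕ} {κ c m : ℝ} (hb : 0 < b) (hκ : 128 ≤ κ)
    (hc : 0 < c) (hcm : c * n ≤ m) (hm : 0 < m) (hbm : κ * b ≤ Real.exp (-256) * m) :
    n.choose b * Real.exp (κ * b - κ * b / 64 * Real.log (m / (κ * b)))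
      ≤ (Real.exp 1 * (κ / c) * Real.exp (-κ)) ^ b := by
  have hb' : (0 : ℝ) < b := by exact_mod_cast hb
  set z : ℝ := m / (κ * b) with hz
  have hz0 : 0 < z := by positivity
  have hlog : 256 ≤ Real.log z := by
    rw [Real.le_log_iff_exp_le hz0, hz, le_div_iff₀ (by positivity)]
    rwa [Real.exp_neg, ← div_eq_inv_mul, le_div_iff₀' (Real.exp_pos _)] at hbm
  have hnb : n / b ≤ κ / c * z := by
    rw [hz, div_le_iff₀ hb', show κ / c * (m / (κ * b)) * b = m / c by field_simp,
      le_div_iff₀ hc]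
    linarith
  calc n.choose b * Real.exp (κ * b - κ * b / 64 * Real.log z)
      ≤ (Real.exp 1 * (n / b)) ^ b * Real.exp (κ * b - κ * b / 64 * Real.log z) := by
        gcongr
        exact choose_le_exp_mul_div_pow n hb
    _ = (Real.exp 1 * (n / b) * Real.exp (κ - κ / 64 * Real.log z)) ^ b := by
        rw [mul_pow (Real.exp 1 * ((n : ℝ) / b)), ← Real.exp_nat_mul]
        congr 2
        ring
    _ ≤ (Real.exp 1 * (κ / c * z) * Real.exp (κ - κ / 64 * Real.log z)) ^ b := by gcongr
    _ = (Real.exp 1 * (κ / c) * Real.exp (Real.log z + (κ - κ / 64 * Real.log z))) ^ b := by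
        rw [Real.exp_add, Real.exp_log hz0]
        ring
    _ ≤ (Real.exp 1 * (κ / c) * Real.exp (-κ)) ^ b := by
        gcongr
        nlinarith

theorem sum_range_pow_succ_le {η : ℝ} (hη0 : 0 ≤ η) (hη : η ≤ 1 / 2) (n : ℕ) :
    ∑ b ∈ Finset.range n, η ^ (b + 1) ≤ 2 * η := by
  have hgeom : ∑ b ∈ Finset.range n, η ^ b ≤ (1 - η)⁻¹ := by
    rw [← tsum_geometric_of_lt_one hη0 (by linarith)]
    exact (summable_geometric_of_lt_one hη0 (by linarith)).sum_le_tsum _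
      fun b _ => pow_nonneg hη0 b
  have hinv : (1 - η)⁻¹ ≤ 2 := by
    rw [inv_le_comm₀ (by linarith) two_pos]
    linarith
  calc ∑ b ∈ Finset.range n, η ^ (b + 1) = (∑ b ∈ Finset.range n, η ^ b) * η := by
        simp only [pow_succ, Finset.sum_mul]
    _ ≤ 2 * η := by
        gcongr
        exact hgeom.trans hinv

theorem sum_le_sum_range_pow_of_choose_mul_le {ι : Type*} [Fintype ι] {η : ℝ} (hη : 0 ≤ η)
    {𝒮 : Finset (Finset ι)} {g : Finset ι → ℝ} (h𝒮 : ∀ B ∈ 𝒮, B.Nonempty)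
    (hg : ∀ B ∈ 𝒮, (Fintype.card ι).choose #B * g B ≤ η ^ #B) :
    ∑ B ∈ 𝒮, g B ≤ ∑ b ∈ Finset.range (Fintype.card ι), η ^ (b + 1) := by
  let f : ℕ → ℝ := fun b => if b = 0 then 0 else η ^ b / (Fintype.card ι).choose b
  calc ∑ B ∈ 𝒮, g B ≤ ∑ B ∈ 𝒮, f #B := Finset.sum_le_sum fun B hB => by
        have hchoose : (0 : ℝ) < (Fintype.card ι).choose #B := by
          exact_mod_cast Nat.choose_pos B.card_le_univ
        simp only [f, (h𝒮 B hB).card_ne_zero, if_false]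
        exact (le_div_iff₀' hchoose).2 (hg B hB)
    _ ≤ ∑ B, f #B :=
        Finset.sum_le_sum_of_subset_of_nonneg (Finset.subset_univ _) fun B _ _ => by
          simp only [f]
          positivity
    _ = ∑ b ∈ Finset.range (Fintype.card ι + 1), (Fintype.card ι).choose b * f b := by
        rw [← Finset.powerset_univ, Finset.sum_powerset_apply_card, Finset.card_univ]
        simp only [nsmul_eq_mul]
    _ = ∑ b ∈ Finset.range (Fintype.card ι), η ^ (b + 1) := by
        rw [Finset.sum_range_succ']
        refine (add_eq_left.2 (by simp [f])).trans (Finset.sum_congr rfl fun b hb => ?_)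
        have hchoose : ((Fintype.card ι).choose (b + 1) : ℝ) ≠ 0 := by
          exact_mod_cast (Nat.choose_pos (Finset.mem_range.1 hb)).ne'
        simp [f, mul_div_cancel₀ _ hchoose]

open Classical in
theorem expect_not_keyExpanding_le_sum {ι : Type*} [Fintype ι] [DecidableEq ι] {K P : ℕ} {ε : ℝ} :
    𝔼 σ : ι → KeyRing P K, (if ∀ T, KeyExpanding ε T σ then (0 : ℝ) else 1)
      ≤ ∑ B : Finset ι with B.Nonempty ∧ (K : ℝ) * #B ≤ ε * P,
          𝔼 σ : ι → KeyRing P K, (if K * #B < 64 * repeatedKeys σ B then (1 : ℝ) else 0) := by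
  rw [← Finset.expect_sum_comm]
  refine Finset.expect_le_expect fun σ _ => ?_
  split_ifs with h
  · exact Finset.sum_nonneg fun B _ => by positivity
  · simp only [KeyExpanding, not_forall, not_le] at h
    obtain ⟨T, B, -, hBP, hlt⟩ := h
    have hB : B.Nonempty := by
      rw [Finset.nonempty_iff_ne_empty]
      rintro rfl
      simp [repeatedKeys] at hlt
    calc (1 : ℝ) = if K * #B < 64 * repeatedKeys σ B then 1 else 0 := (if_pos hlt).symm
      _ ≤ _ := Finset.single_le_sum (f := fun B : Finset ι =>
          if K * #B < 64 * repeatedKeys σ B then (1 : ℝ) else 0)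
          (fun B _ => by positivity) (by simp [hB, hBP])

open Classical in
theorem expect_not_keyExpanding_le {n K P : ℕ} {c : ℝ} (hKP : K ≤ P) (hK : 128 ≤ K)
    (hc : 0 < c) (hcP : c * n ≤ P)
    (hη : Real.exp 1 * (K / c) * Real.exp (-K) ≤ 1 / 2) :
    𝔼 σ : Fin n → KeyRing P K,
        (if ∀ T, KeyExpanding (Real.exp (-256)) T σ then (0 : ℝ) else 1)
      ≤ 2 * (Real.exp 1 * (K / c) * Real.exp (-K)) := by
  have hP : (0 : ℝ) < P := by exact_mod_cast (show 0 < P by omega)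
  refine expect_not_keyExpanding_le_sum.trans ((sum_le_sum_range_pow_of_choose_mul_le
    (by positivity) (fun B hB => (Finset.mem_filter.1 hB).2.1) fun B hB => ?_).trans
      (sum_range_pow_succ_le (by positivity) hη _))
  obtain ⟨-, hB, hBP⟩ := Finset.mem_filter.1 hB
  have hBP' : (K : ℝ) * #B ≤ P :=
    hBP.trans (mul_le_of_le_one_left hP.le (Real.exp_le_one_iff.2 (by norm_num)))
  rw [Fintype.card_fin]
  exact (mul_le_mul_of_nonneg_left (expect_lt_mul_repeatedKeys_le hKP (by omega) hB hBP')
    (Nat.cast_nonneg _)).trans (choose_mul_exp_sub_mul_log_le hB.card_pos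
      (by exact_mod_cast hK) hc hcP hP hBP)

/-! ### Bounds for the avoidance probability -/

section AvoidProbBounds

variable {ι : Type*} {K P : ℕ} {p ε : ℝ} {σ : ι → KeyRing P K} {T : Finset ι}

theorem expect_avoidProb_pow_le [Fintype ι] [DecidableEq ι] (hKP : K ≤ P) (hp0 : 0 ≤ p)
    (hp1 : p ≤ 1) (hx : (K : ℝ) ^ 2 / P ≤ 2) (T : Finset ι) (m : ℕ) :
    𝔼 σ : ι → KeyRing P K, avoidProb p σ T ^ m
      ≤ Real.exp (-((1 - (K : ℝ) ^ 2 / P / 2) * (#T * (p * ((K : ℝ) ^ 2 / P)) * m))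
        + (Real.exp (p * (1 - (K : ℝ) ^ 2 / P / 2) * (K / P) * m) - 1) *
          ((K : ℝ) ^ 2 / P) * (#T : ℝ) ^ 2) := by
  set x : ℝ := (K : ℝ) ^ 2 / P with hxdef
  set w : ℝ := p * (1 - x / 2) * (K / P) * m with hw
  have hw0 : 0 ≤ w := by
    have : 0 ≤ 1 - x / 2 := by linarith
    positivity
  have hpointwise : ∀ σ : ι → KeyRing P K, avoidProb p σ T ^ m
      ≤ Real.exp (-((1 - x / 2) * (#T * (p * x) * m))) * Real.exp w ^ repeatedKeys σ T := by
    intro σ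
    have hkeys : (K : ℝ) * #T = #(keyUnion σ T) + repeatedKeys σ T := by
      exact_mod_cast (card_keyUnion_add_repeatedKeys σ T).symm
    calc avoidProb p σ T ^ m
        ≤ Real.exp (-(p * (1 - x / 2) * (K / P * #(keyUnion σ T)))) ^ m :=
          pow_le_pow_left₀ (avoidProb_nonneg hp1 _ _) (avoidProb_le_exp_keyUnion hKP hp0 hp1 σ T) m
      _ = Real.exp (-(p * (1 - x / 2) * m * (K / P * (K * #T))) + repeatedKeys σ T * w) := by
          rw [← Real.exp_nat_mul, hw, hkeys]
          ring_nf
      _ = _ := by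
          rw [Real.exp_add, Real.exp_nat_mul, hxdef]
          ring_nf
  calc 𝔼 σ : ι → KeyRing P K, avoidProb p σ T ^ m
      ≤ 𝔼 σ : ι → KeyRing P K, Real.exp (-((1 - x / 2) * (#T * (p * x) * m))) *
        Real.exp w ^ repeatedKeys σ T := Finset.expect_le_expect fun σ _ => hpointwise σ
    _ = Real.exp (-((1 - x / 2) * (#T * (p * x) * m))) *
        𝔼 σ : ι → KeyRing P K, Real.exp w ^ repeatedKeys σ T := by rw [Finset.mul_expect]
    _ ≤ Real.exp (-((1 - x / 2) * (#T * (p * x) * m))) *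
        Real.exp ((Real.exp w - 1) * x * (#T : ℝ) ^ 2) :=
        mul_le_mul_of_nonneg_left (expect_pow_repeatedKeys_le hKP (Real.one_le_exp hw0) T)
          (Real.exp_pos _).le
    _ = _ := by rw [← Real.exp_add]

theorem avoidProb_le_of_exp_keyUnion_le (hKP : K ≤ P) (hp0 : 0 ≤ p) (hp1 : p ≤ 1)
    (hx : (K : ℝ) ^ 2 / P ≤ 1 / 64) {δ : ℝ}
    (hδ : ∀ B ⊆ T, Real.exp (-(K / P * #(keyUnion σ B)))
      ≤ Real.exp (-(63 / 64 * ((K : ℝ) ^ 2 / P))) ^ #B + δ) :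
    avoidProb p σ T ≤ Real.exp (-(62 / 64 * (#T * (p * ((K : ℝ) ^ 2 / P))))) + δ := by
  set x : ℝ := (K : ℝ) ^ 2 / P
  have hx0 : 0 ≤ x := by positivity
  have hlin : 62 / 64 * (p * x) ≤ p * (1 - x / 2) * (63 / 64 * x) := by
    have : 0 ≤ p * x * (1 / 64 - x) := mul_nonneg (by positivity) (by linarith)
    nlinarith [mul_nonneg hp0 hx0]
  calc avoidProb p σ T
      ≤ subsetAverage p T (fun B => Real.exp (-(K / P * #(keyUnion σ B)))) :=
        avoidProb_le_subsetAverage hKP hp0 hp1 σ T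
    _ ≤ subsetAverage p T (fun B => Real.exp (-(63 / 64 * x)) ^ #B + δ) :=
        subsetAverage_mono hp0 hp1 hδ
    _ = (1 - p + p * Real.exp (-(63 / 64 * x))) ^ #T + δ := by
        rw [subsetAverage_add, subsetAverage_pow, subsetAverage_const]
    _ ≤ Real.exp (-(p * (1 - x / 2) * (63 / 64 * x))) ^ #T + δ := by
        have : 0 ≤ 1 - p := by linarith
        gcongr
        exact one_sub_add_mul_exp_neg_le hp0 (by positivity) (by linarith)
    _ ≤ Real.exp (-(62 / 64 * (#T * (p * x)))) + δ := by
        rw [← Real.exp_nat_mul]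
        gcongr
        nlinarith [mul_le_mul_of_nonneg_left hlin (Nat.cast_nonneg (α := ℝ) #T)]

theorem KeyExpanding.avoidProb_le_add (hσ : KeyExpanding ε T σ) (hKP : K ≤ P) (hp0 : 0 ≤ p)
    (hp1 : p ≤ 1) (hK : 0 < K) (hKε : K ≤ ε * P) (hx : (K : ℝ) ^ 2 / P ≤ 1 / 64) :
    avoidProb p σ T ≤ Real.exp (-(62 / 64 * (#T * (p * ((K : ℝ) ^ 2 / P)))))
      + Real.exp (-(63 / 128 * (ε * K))) := by
  have hP : (0 : ℝ) < P := by exact_mod_cast hK.trans_le hKP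
  refine avoidProb_le_of_exp_keyUnion_le hKP hp0 hp1 hx fun B hBT => ?_
  rcases le_or_gt ((K : ℝ) * #B) (ε * P) with hB | hB
  · exact le_add_of_le_of_nonneg (hσ.exp_keyUnion_le hBT hB) (Real.exp_pos _).le
  · refine le_add_of_nonneg_of_le (by positivity) (Real.exp_le_exp.2 (neg_le_neg ?_))
    calc 63 / 128 * (ε * K) = K / P * (63 / 128 * (ε * P)) := by field_simp
      _ ≤ K / P * #(keyUnion σ B) := by
          gcongr
          exact hσ.mul_le_card_keyUnion hBT hK hKε hB

end AvoidProbBounds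

theorem KeyExpanding.avoidProb_le {n K P : ℕ} {p c ε : ℝ} {σ : Fin n → KeyRing P K}
    {T : Finset (Fin n)} (hσ : KeyExpanding ε T σ) (hKP : K ≤ P) (hp0 : 0 ≤ p) (hp1 : p ≤ 1)
    (hK : 0 < K) (hKε : K ≤ ε * P) (hx : (K : ℝ) ^ 2 / P ≤ 1 / 64)
    (hcP : c * n ≤ P) (hε : 0 < ε) (hc : 0 < c) (hcK : ε * c ≤ 8 * K)
    (hq : 1 ≤ n * (p * ((K : ℝ) ^ 2 / P)))
    (hδ : Real.exp (-(63 / 128 * (ε * K))) ≤ ε * c / K / 64 * Real.exp (-8)) :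
    avoidProb p σ T ≤ Real.exp (-(61 / 64 * min (#T * (p * ((K : ℝ) ^ 2 / P))) 8)) := by
  have hK' : (0 : ℝ) < K := by exact_mod_cast hK
  set q : ℝ := p * ((K : ℝ) ^ 2 / P)
  have hq0 : 0 ≤ q := by positivity
  set t : ℝ := min (#T * q) 8
  have ht0 : 0 ≤ t := by positivity
  have htq : t ≤ #T * q := min_le_left _ _
  rcases le_or_gt ((K : ℝ) * #T) (ε * P) with hT | hT
  · have h := avoidProb_le_of_exp_keyUnion_le (δ := 0) hKP hp0 hp1 hx fun B hB =>
      (hσ.exp_keyUnion_le hB ((by gcongr : (K : ℝ) * #B ≤ K * #T).trans hT)).trans_eq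
        (add_zero _).symm
    rw [add_zero] at h
    exact h.trans (Real.exp_le_exp.2 (by linarith))
  · have htc : ε * c / K ≤ t := by
      refine le_min ?_ ((div_le_iff₀ hK').2 hcK)
      rw [div_le_iff₀' hK']
      calc ε * c ≤ ε * c * (n * q) := le_mul_of_one_le_right (by positivity) hq
        _ = ε * (c * n) * q := by ring
        _ ≤ ε * P * q := by gcongr
        _ ≤ K * #T * q := by gcongr
        _ = K * (#T * q) := by ring
    calc avoidProb p σ T ≤ Real.exp (-(62 / 64 * (#T * q))) + Real.exp (-(63 / 128 * (ε * K))) :=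
          hσ.avoidProb_le_add hKP hp0 hp1 hK hKε hx
      _ ≤ Real.exp (-(62 / 64 * t)) + t / 64 * Real.exp (-(62 / 64 * t)) := by
          gcongr
          refine hδ.trans ?_
          gcongr
          linarith [min_le_right (#T * q) 8]
      _ = (t / 64 + 1) * Real.exp (-(62 / 64 * t)) := by ring
      _ ≤ Real.exp (t / 64) * Real.exp (-(62 / 64 * t)) := by
          gcongr
          exact Real.add_one_le_exp _
      _ = Real.exp (-(61 / 64 * t)) := by
          rw [← Real.exp_add]
          ring_nf

/-! ### The near-critical window -/

/-- The near-critical window: the key pool has linear size, the probability `≈ K²/P` that two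
nodes share a key is `O(1 / log n)`, and the mean degree `≈ n * (p * (K²/P))` lies between
`log n` and `2 * log n`. -/
structure NearCritical (c c₁ : ℝ) (n K P : ℕ) (p : ℝ) : Prop where
  le_pool : K ≤ P
  nonneg : 0 ≤ p
  le_one : p ≤ 1
  mul_le_pool : c * n ≤ P
  sq_div_le : (K : ℝ) ^ 2 / P ≤ c₁ / Real.log n
  log_le_mean : Real.log n ≤ n * (p * ((K : ℝ) ^ 2 / P))
  mean_le_log : n * (p * ((K : ℝ) ^ 2 / P)) ≤ 2 * Real.log n

theorem tendsto_log_natCast_atTop : Tendsto (fun n : ℕ => Real.log n) atTop atTop :=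
  Real.tendsto_log_atTop.comp tendsto_natCast_atTop_atTop

theorem eventually_pow_log_le (a : ℝ) (b : ℕ) : ∀ᶠ n : ℕ in atTop, (a * Real.log n) ^ b ≤ n := by
  have h : (fun x : ℝ => (a * Real.log x) ^ b) =o[atTop] (id : ℝ → ℝ) := by
    simp only [mul_pow]
    exact (Real.isLittleO_pow_log_id_atTop (n := b)).const_mul_left _
  filter_upwards [(h.comp_tendsto tendsto_natCast_atTop_atTop).bound one_pos] with n hn
  simpa using (le_abs_self _).trans hn

namespace NearCritical

variable {c c₁ p : ℝ} {n K P : ℕ}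

theorem keyRing_pos (h : NearCritical c c₁ n K P p) (hn : 0 < Real.log n) : 0 < K := by
  rw [Nat.pos_iff_ne_zero]
  rintro rfl
  have := h.log_le_mean
  simp only [Nat.cast_zero, zero_pow two_ne_zero, zero_div, mul_zero] at this
  exact absurd this hn.not_ge

theorem mul_log_le_sq (h : NearCritical c c₁ n K P p) (hc : 0 < c) (hn : 0 < Real.log n) :
    c * Real.log n ≤ (K : ℝ) ^ 2 := by
  have hK := h.keyRing_pos hn
  have hP : (0 : ℝ) < P := by exact_mod_cast hK.trans_le h.le_pool
  calc c * Real.log n ≤ c * (n * (p * ((K : ℝ) ^ 2 / P))) := by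
        gcongr
        exact h.log_le_mean
    _ = c * n * (p * ((K : ℝ) ^ 2 / P)) := by ring
    _ ≤ P * (1 * ((K : ℝ) ^ 2 / P)) := by
        have := h.nonneg
        gcongr
        exacts [h.mul_le_pool, h.le_one]
    _ = (K : ℝ) ^ 2 := by field_simp

theorem sq_div_mul_log_le (h : NearCritical c c₁ n K P p) (hn : 0 < Real.log n) :
    (K : ℝ) ^ 2 / P * Real.log n ≤ c₁ :=
  (le_div_iff₀ hn).1 h.sq_div_le

theorem eventually_keyRing (hc : 0 < c) {Q : ℝ → Prop} (hQ : ∀ᶠ κ in atTop, Q κ) :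
    ∀ᶠ n : ℕ in atTop, ∀ (K P : ℕ) (p : ℝ), NearCritical c c₁ n K P p → Q K := by
  obtain ⟨κ₀, hκ₀⟩ := eventually_atTop.1 hQ
  filter_upwards [tendsto_log_natCast_atTop.eventually_gt_atTop 0,
    tendsto_log_natCast_atTop.eventually_ge_atTop (κ₀ ^ 2 / c)] with n hn hlog K P p h
  refine hκ₀ K (abs_le_of_sq_le_sq' ?_ (Nat.cast_nonneg K)).2
  exact ((div_le_iff₀' hc).1 hlog).trans (h.mul_log_le_sq hc hn)

theorem eventually_sq_div_le {a : ℝ} (ha : 0 < a) :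
    ∀ᶠ n : ℕ in atTop, ∀ (K P : ℕ) (p : ℝ), NearCritical c c₁ n K P p →
      (K : ℝ) ^ 2 / P ≤ a := by
  filter_upwards [(tendsto_log_natCast_atTop.const_div_atTop c₁).eventually_le_const ha]
    with n hn K P p h
  exact h.sq_div_le.trans hn

end NearCritical

theorem eventually_mul_exp_neg_mul_le {a b : ℝ} (ha : 0 < a) (hb : 0 < b) :
    ∀ᶠ x : ℝ in atTop, x * Real.exp (-(a * x)) ≤ b := by
  have h := (Real.tendsto_pow_mul_exp_neg_atTop_nhds_zero 1).comp
    (tendsto_id.const_mul_atTop ha)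
  filter_upwards [h.eventually_le_const (mul_pos ha hb)] with x hx
  simp only [Function.comp_apply, pow_one, id] at hx
  exact le_of_mul_le_mul_left (by linarith) ha

theorem NearCritical.eventually_avoidProb_le {c c₁ ε : ℝ} (hc : 0 < c) (hε : 0 < ε) :
    ∀ᶠ n : ℕ in atTop, ∀ (K P : ℕ) (p : ℝ), NearCritical c c₁ n K P p →
      ∀ (T : Finset (Fin n)) (σ : Fin n → KeyRing P K), KeyExpanding ε T σ →
        avoidProb p σ T ≤ Real.exp (-(61 / 64 * min (#T * (p * ((K : ℝ) ^ 2 / P))) 8)) := by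
  have hK : ∀ᶠ κ : ℝ in atTop, 0 < κ ∧ 1 ≤ ε * κ ∧ ε * c ≤ 8 * κ ∧
      Real.exp (-(63 / 128 * (ε * κ))) ≤ ε * c / κ / 64 * Real.exp (-8) := by
    filter_upwards [eventually_gt_atTop 0, (tendsto_id.const_mul_atTop hε).eventually_ge_atTop 1,
      eventually_ge_atTop (ε * c), eventually_mul_exp_neg_mul_le
        (by positivity : 0 < 63 / 128 * ε) (by positivity : 0 < ε * c / 64 * Real.exp (-8))]
      with κ hκ hεκ hcκ hexp
    refine ⟨hκ, hεκ, by linarith, ?_⟩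
    rw [show ε * c / κ / 64 * Real.exp (-8) = ε * c / 64 * Real.exp (-8) / κ by ring,
      le_div_iff₀' hκ, ← mul_assoc]
    exact hexp
  filter_upwards [eventually_keyRing (c₁ := c₁) hc hK,
    eventually_sq_div_le (c := c) (c₁ := c₁) (a := 1 / 64) (by norm_num),
    tendsto_log_natCast_atTop.eventually_ge_atTop 1] with n hK hx hn K P p h T σ hσ
  obtain ⟨hK0, hεK, hcK, hδ⟩ := hK K P p h
  have hP : (0 : ℝ) < P := hK0.trans_le (by exact_mod_cast h.le_pool)
  have hKε : K ≤ ε * P := by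
    have := (div_le_iff₀ hP).1 (hx K P p h)
    nlinarith
  exact hσ.avoidProb_le h.le_pool h.nonneg h.le_one (by exact_mod_cast hK0) hKε (hx K P p h)
    h.mul_le_pool hε hc hcK (hn.trans h.log_le_mean) hδ

/-! ### Sets of few vertices -/

theorem expect_avoidProb_pow_le_exp {n K P m : ℕ} {p c₁ D : ℝ} (hKP : K ≤ P) (hp0 : 0 ≤ p)
    (hp1 : p ≤ 1) (hx : (K : ℝ) ^ 2 / P ≤ 2) (hmn : m ≤ n) (T : Finset (Fin n))
    (hm : p * ((K : ℝ) ^ 2 / P) * (n - m) ≤ 1)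
    (hxn : (K : ℝ) ^ 2 / P / 2 * (n * (p * ((K : ℝ) ^ 2 / P))) ≤ c₁)
    (hD : (#T : ℝ) * ((Real.exp (n * (p * ((K : ℝ) ^ 2 / P)) / K) - 1) * ((K : ℝ) ^ 2 / P)) ≤ D) :
    𝔼 σ : Fin n → KeyRing P K, avoidProb p σ T ^ m
      ≤ Real.exp (-(#T * (n * (p * ((K : ℝ) ^ 2 / P)) - (1 + c₁ + D)))) := by
  refine (expect_avoidProb_pow_le hKP hp0 hp1 hx T m).trans (Real.exp_le_exp.2 ?_)
  set x : ℝ := (K : ℝ) ^ 2 / P with hxdef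
  set q : ℝ := p * x with hq
  have hmn' : (m : ℝ) ≤ n := by exact_mod_cast hmn
  have hx0 : 0 ≤ x := by positivity
  have hmain : n * q - (1 + c₁) ≤ (1 - x / 2) * (q * m) := by
    have : x / 2 * (q * m) ≤ x / 2 * (n * q) := by
      rw [mul_comm (n : ℝ) q]
      gcongr
    linarith
  have hrate : p * (1 - x / 2) * (K / P) * m ≤ n * q / K := by
    rcases Nat.eq_zero_or_pos K with rfl | hK
    · simp
    have : (0 : ℝ) < K := by exact_mod_cast hK
    calc p * (1 - x / 2) * (K / P) * m ≤ p * 1 * (K / P) * n := by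
          gcongr
          linarith
      _ = n * q / K := by
          rw [hq, hxdef]
          field_simp
  have hcorr : (#T : ℝ) * ((Real.exp (p * (1 - x / 2) * (K / P) * m) - 1) * x) ≤ D :=
    le_trans (by gcongr) hD
  calc -((1 - x / 2) * (#T * q * m))
        + (Real.exp (p * (1 - x / 2) * (K / P) * m) - 1) * x * (#T : ℝ) ^ 2
      = -(#T * ((1 - x / 2) * (q * m)))
        + #T * (#T * ((Real.exp (p * (1 - x / 2) * (K / P) * m) - 1) * x)) := by ring
    _ ≤ -(#T * (n * q - (1 + c₁))) + #T * D := by gcongr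
    _ = -(#T * (n * q - (1 + c₁ + D))) := by ring

theorem add_sq_le_of_pow_eight_le {n r k : ℕ} (hn : 4 ≤ n) (hr : r ^ 8 ≤ n) (hk : k ^ 8 ≤ n) :
    (r + k) ^ 2 ≤ n := by
  wlog hrk : r ≤ k generalizing r k
  · rw [add_comm]
    exact this hk hr (le_of_not_ge hrk)
  rcases lt_or_ge k 2 with hk2 | hk2
  · calc (r + k) ^ 2 ≤ (1 + 1) ^ 2 := by gcongr <;> omega
      _ ≤ n := hn
  · calc (r + k) ^ 2 ≤ (k + k) ^ 2 := by gcongr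
      _ = 2 ^ 2 * k ^ 2 := by ring
      _ ≤ 2 ^ 6 * k ^ 2 := by gcongr <;> norm_num
      _ ≤ k ^ 6 * k ^ 2 := by gcongr
      _ = k ^ 8 := by ring
      _ ≤ n := hk

namespace NearCritical

variable {c c₁ p : ℝ} {n K P r : ℕ}

theorem mul_exp_sub_one_mul_le_of_le (h : NearCritical c c₁ n K P p) (hn : 0 < Real.log n)
    (hrK : r ≤ K) (hlog : 2 * Real.log n ≤ K) :
    r * ((Real.exp (n * (p * ((K : ℝ) ^ 2 / P)) / K) - 1) * ((K : ℝ) ^ 2 / P)) ≤ 4 * c₁ := by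
  set w : ℝ := n * (p * ((K : ℝ) ^ 2 / P)) / K
  have hK : (0 : ℝ) < K := by linarith
  have hw0 : 0 ≤ w := div_nonneg (hn.le.trans h.log_le_mean) hK.le
  have hwK : w ≤ 2 * Real.log n / K :=
    div_le_div_of_nonneg_right h.mean_le_log hK.le
  have hw1 : w ≤ 1 := hwK.trans ((div_le_one hK).2 hlog)
  have hexp : Real.exp w - 1 ≤ 2 * w := by
    simpa only [abs_of_nonneg hw0] using
      (le_abs_self _).trans (Real.abs_exp_sub_one_le (x := w) (by rwa [abs_of_nonneg hw0]))
  calc r * ((Real.exp w - 1) * ((K : ℝ) ^ 2 / P))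
      ≤ K * (2 * (2 * Real.log n / K) * ((K : ℝ) ^ 2 / P)) := by
        have : 0 ≤ Real.exp w - 1 := by linarith [Real.one_le_exp hw0]
        gcongr
        linarith
    _ = 4 * ((K : ℝ) ^ 2 / P * Real.log n) := by
        field_simp
        ring
    _ ≤ 4 * c₁ := by
        gcongr
        exact h.sq_div_mul_log_le hn

theorem mul_exp_mul_le_one (h : NearCritical c c₁ n K P p) (hc : 0 < c) (hn : 0 < Real.log n)
    (hlog : 256 ≤ c * Real.log n) (hcn : 1 ≤ c ^ 8 * n ^ 4) (hr : r ^ 8 ≤ n) (hK : K ^ 8 ≤ n) :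
    r * (Real.exp (n * (p * ((K : ℝ) ^ 2 / P)) / K) * ((K : ℝ) ^ 2 / P)) ≤ 1 := by
  set w : ℝ := n * (p * ((K : ℝ) ^ 2 / P)) / K with hw
  have hn0 : (0 : ℝ) < n := by
    refine lt_of_le_of_ne n.cast_nonneg fun hn0 => ?_
    rw [← hn0, Real.log_zero] at hn
    exact lt_irrefl _ hn
  have hKpos : (0 : ℝ) < K := by exact_mod_cast h.keyRing_pos hn
  have hw8 : 8 * w ≤ Real.log n := by
    have hK16 : 16 ≤ (K : ℝ) := by
      refine (abs_le_of_sq_le_sq' ?_ hKpos.le).2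
      linarith [h.mul_log_le_sq hc hn]
    rw [hw, ← mul_div_assoc, div_le_iff₀ hKpos]
    nlinarith [h.mean_le_log]
  have hx : (K : ℝ) ^ 2 / P ≤ (K : ℝ) ^ 2 / (c * n) := by
    gcongr
    exact h.mul_le_pool
  have hexp : Real.exp w ^ 8 ≤ n := by
    rw [← Real.exp_nat_mul, ← Real.exp_log hn0]
    exact_mod_cast Real.exp_le_exp.2 hw8
  refine (pow_le_one_iff_of_nonneg (by positivity) (by norm_num : 8 ≠ 0)).1 ?_
  calc (r * (Real.exp w * ((K : ℝ) ^ 2 / P))) ^ 8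
      ≤ (r * (Real.exp w * ((K : ℝ) ^ 2 / (c * n)))) ^ 8 := by gcongr
    _ = (r : ℝ) ^ 8 * (Real.exp w ^ 8 * (((K : ℝ) ^ 8) ^ 2 / (c * n) ^ 8)) := by ring
    _ ≤ n * (n * ((n : ℝ) ^ 2 / (c * n) ^ 8)) := by
        gcongr
        exacts [by exact_mod_cast hr, by exact_mod_cast hK]
    _ = 1 / (c ^ 8 * n ^ 4) := by field_simp
    _ ≤ 1 := (div_le_one (by positivity)).2 hcn

theorem eventually_mul_exp_sub_one_mul_le (hc : 0 < c) (hc₁ : 0 < c₁) :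
    ∀ᶠ n : ℕ in atTop, ∀ (K P : ℕ) (p : ℝ), NearCritical c c₁ n K P p → ∀ r : ℕ, r ^ 8 ≤ n →
      r * ((Real.exp (n * (p * ((K : ℝ) ^ 2 / P)) / K) - 1) * ((K : ℝ) ^ 2 / P))
        ≤ 4 * c₁ + 1 := by
  have hpow : Tendsto (fun n : ℕ => c ^ 8 * (n : ℝ) ^ 4) atTop atTop :=
    ((tendsto_pow_atTop (by norm_num)).comp tendsto_natCast_atTop_atTop).const_mul_atTop
      (by positivity)
  filter_upwards [eventually_pow_log_le 2 8, tendsto_log_natCast_atTop.eventually_gt_atTop 0,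
    (tendsto_log_natCast_atTop.const_mul_atTop hc).eventually_ge_atTop 256,
    hpow.eventually_ge_atTop 1] with n hlog8 hn hclog hcn K P p h r hr
  rcases le_total n (K ^ 8) with hnK | hKn
  · have hrK : r ≤ K := (Nat.pow_le_pow_iff_left (by norm_num)).1 (hr.trans hnK)
    have hlogK : 2 * Real.log n ≤ K := by
      refine le_of_pow_le_pow_left₀ (by norm_num) K.cast_nonneg (hlog8.trans ?_)
      exact_mod_cast hnK
    linarith [h.mul_exp_sub_one_mul_le_of_le hn hrK hlogK]
  · calc _ ≤ r * (Real.exp (n * (p * ((K : ℝ) ^ 2 / P)) / K) * ((K : ℝ) ^ 2 / P)) := by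
          gcongr
          linarith
      _ ≤ 1 := h.mul_exp_mul_le_one hc hn hclog hcn hr hKn
      _ ≤ 4 * c₁ + 1 := by linarith

theorem mul_sub_le_one (h : NearCritical c c₁ n K P p) (hn : 0 < n)
    (hlog : (2 * Real.log n) ^ 2 ≤ n) {k : ℕ} (hrk : (r + k) ^ 2 ≤ n) :
    p * ((K : ℝ) ^ 2 / P) * (n - (n - r - k : ℕ)) ≤ 1 := by
  have hle : r + k ≤ n := (Nat.le_self_pow two_ne_zero _).trans hrk
  have hprod : 2 * Real.log n * (r + k : ℝ) ≤ n := by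
    refine (abs_le_of_sq_le_sq' ?_ n.cast_nonneg).2
    calc (2 * Real.log n * (r + k : ℝ)) ^ 2 = (2 * Real.log n) ^ 2 * ((r + k : ℕ) : ℝ) ^ 2 := by
          push_cast
          ring
      _ ≤ (n : ℝ) * n := by
          gcongr
          exact_mod_cast hrk
      _ = (n : ℝ) ^ 2 := by ring
  have hn' : (0 : ℝ) < n := by exact_mod_cast hn
  rw [Nat.sub_sub, Nat.cast_sub hle, sub_sub_cancel]
  push_cast
  refine le_of_mul_le_mul_left ?_ hn'
  calc n * (p * ((K : ℝ) ^ 2 / P) * (r + k)) = n * (p * ((K : ℝ) ^ 2 / P)) * (r + k) := by ring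
    _ ≤ 2 * Real.log n * (r + k) :=
        mul_le_mul_of_nonneg_right h.mean_le_log (by positivity)
    _ ≤ n * 1 := by rwa [mul_one]

theorem eventually_expect_avoidProb_pow_le (hc : 0 < c) (hc₁ : 0 < c₁) (k : ℕ) :
    ∀ᶠ n : ℕ in atTop, ∀ (K P : ℕ) (p : ℝ), NearCritical c c₁ n K P p →
      ∀ T : Finset (Fin n), #T ^ 8 ≤ n → 𝔼 σ : Fin n → KeyRing P K, avoidProb p σ T ^ (n - #T - k)
        ≤ Real.exp (-(#T * (n * (p * ((K : ℝ) ^ 2 / P)) - (5 * c₁ + 2)))) := by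
  filter_upwards [eventually_mul_exp_sub_one_mul_le hc hc₁, eventually_pow_log_le 2 2,
    eventually_sq_div_le (c := c) (c₁ := c₁) two_pos, eventually_ge_atTop (max 4 (k ^ 8)),
    tendsto_log_natCast_atTop.eventually_gt_atTop 0] with n hcorr hlog hx hkn hn K P p h T hT
  have := h.nonneg
  set q : ℝ := p * ((K : ℝ) ^ 2 / P)
  have hm : q * (n - (n - #T - k : ℕ)) ≤ 1 := by
    exact h.mul_sub_le_one (by omega) hlog
      (add_sq_le_of_pow_eight_le (le_of_max_le_left hkn) hT
        (le_of_max_le_right hkn))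
  have hxn : (K : ℝ) ^ 2 / P / 2 * (n * q) ≤ c₁ := by
    calc (K : ℝ) ^ 2 / P / 2 * (n * q) ≤ (K : ℝ) ^ 2 / P / 2 * (2 * Real.log n) :=
          mul_le_mul_of_nonneg_left h.mean_le_log (by positivity)
      _ = (K : ℝ) ^ 2 / P * Real.log n := by ring
      _ ≤ c₁ := h.sq_div_mul_log_le hn
  convert expect_avoidProb_pow_le_exp h.le_pool h.nonneg h.le_one (hx K P p h)
    (by omega : n - #T - k ≤ n) T hm hxn (hcorr K P p h #T hT) using 5
  ring

end NearCritical

/-! ### Sets of many vertices -/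

theorem choose_le_exp_of_lt_pow_eight {n r : ℕ} (hn : 0 < n) (hnr : n < r ^ 8) :
    (n.choose r : ℝ) ≤ Real.exp (r * (1 + 7 / 8 * Real.log n)) := by
  have hr : 0 < r := (Nat.pow_pos_iff.1 (Nat.zero_lt_of_lt hnr)).resolve_right (by norm_num)
  have hr0 : (0 : ℝ) < r := by exact_mod_cast hr
  have hn0 : (0 : ℝ) < n := by exact_mod_cast hn
  have hlog : Real.log n ≤ 8 * Real.log r := by
    have : (n : ℝ) ≤ (r : ℝ) ^ 8 := by exact_mod_cast hnr.le
    simpa using Real.log_le_log hn0 this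
  calc (n.choose r : ℝ) ≤ (Real.exp 1 * (n / r)) ^ r := choose_le_exp_mul_div_pow n hr
    _ = Real.exp (r * (1 + (Real.log n - Real.log r))) := by
        rw [Real.exp_nat_mul, Real.exp_add, Real.exp_sub, Real.exp_log hn0, Real.exp_log hr0]
    _ ≤ Real.exp (r * (1 + 7 / 8 * Real.log n)) := by
        gcongr
        linarith

theorem choose_mul_exp_neg_pow_le_of_mul_le {n r k : ℕ} {q : ℝ} (hnr : n < r ^ 8)
    (hl : 1024 ≤ Real.log n) (hlq : Real.log n ≤ n * q) (hkn : 128 * k ≤ n) (hrq : r * q ≤ 8) :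
    (n.choose r : ℝ) * Real.exp (-(61 / 64 * (r * q))) ^ (n - r - k) ≤ Real.exp (-r) := by
  set l := Real.log n
  have hn : 0 < n := Nat.pos_of_ne_zero (by rintro rfl; norm_num [l] at hl)
  have hn0 : (0 : ℝ) < n := by exact_mod_cast hn
  have hrl : r * l ≤ 8 * n := by
    calc r * l ≤ r * (n * q) := by gcongr
      _ = r * q * n := by ring
      _ ≤ 8 * n := by gcongr
  have hrn : 128 * r ≤ n := by exact_mod_cast (by nlinarith : 128 * (r : ℝ) ≤ n)
  have hm : 63 / 64 * (n : ℝ) ≤ (n - r - k : ℕ) := by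
    have : (63 * n : ℝ) ≤ 64 * (n - r - k : ℕ) := by
      exact_mod_cast (by omega : 63 * n ≤ 64 * (n - r - k))
    linarith
  have hrate : r * (15 / 16 * l) ≤ (n - r - k : ℕ) * (61 / 64 * (r * q)) := by
    have hlr : (r : ℝ) * l ≤ r * (n * q) := by gcongr
    have : 0 ≤ q := nonneg_of_mul_nonneg_right (by linarith : 0 ≤ n * q) hn0
    calc r * (15 / 16 * l) ≤ 63 / 64 * (n : ℝ) * (61 / 64 * (r * q)) := by nlinarith
      _ ≤ _ := by gcongr
  calc (n.choose r : ℝ) * Real.exp (-(61 / 64 * (r * q))) ^ (n - r - k)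
      ≤ Real.exp (r * (1 + 7 / 8 * l)) * Real.exp (-(r * (15 / 16 * l))) := by
        rw [← Real.exp_nat_mul, mul_neg]
        gcongr
        exact choose_le_exp_of_lt_pow_eight hn hnr
    _ = Real.exp (r * (1 - 1 / 16 * l)) := by
        rw [← Real.exp_add]
        ring_nf
    _ ≤ Real.exp (-r) := Real.exp_le_exp.2 (by nlinarith)

theorem choose_mul_exp_neg_eight_pow_le {n r k : ℕ} (hrn : 2 * r ≤ n) (hkn : 128 * k ≤ n) :
    (n.choose r : ℝ) * Real.exp (-(61 / 64 * 8)) ^ (n - r - k) ≤ Real.exp (-r) := by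
  have hm : 3 / 8 * (n : ℝ) ≤ (n - r - k : ℕ) := by
    have : (3 * n : ℝ) ≤ 8 * (n - r - k : ℕ) := by
      exact_mod_cast (by omega : 3 * n ≤ 8 * (n - r - k))
    linarith
  have hr : (r : ℝ) ≤ n := by exact_mod_cast (by omega : r ≤ n)
  have htwo : (2 : ℝ) ≤ Real.exp 1 := by linarith [Real.add_one_le_exp (1 : ℝ)]
  calc (n.choose r : ℝ) * Real.exp (-(61 / 64 * 8)) ^ (n - r - k)
      ≤ (2 : ℝ) ^ n * Real.exp (-(2 * n)) := by
        rw [← Real.exp_nat_mul]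
        gcongr
        · exact_mod_cast Nat.choose_le_two_pow n r
        · linarith
    _ ≤ Real.exp 1 ^ n * Real.exp (-(2 * n)) := by gcongr
    _ = Real.exp (-n) := by
        rw [← Real.exp_nat_mul, ← Real.exp_add]
        ring_nf
    _ ≤ Real.exp (-r) := by gcongr

theorem choose_mul_exp_neg_min_pow_le {n r k : ℕ} {q : ℝ} (hnr : n < r ^ 8) (hrn : 2 * r ≤ n)
    (hl : 1024 ≤ Real.log n) (hlq : Real.log n ≤ n * q) (hkn : 128 * k ≤ n) :
    (n.choose r : ℝ) * Real.exp (-(61 / 64 * min (r * q) 8)) ^ (n - r - k) ≤ Real.exp (-r) := by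
  rcases le_total (r * q) 8 with hrq | hrq
  · rw [min_eq_left hrq]
    exact choose_mul_exp_neg_pow_le_of_mul_le hnr hl hlq hkn hrq
  · rw [min_eq_right hrq]
    exact choose_mul_exp_neg_eight_pow_le hrn hkn

theorem eventually_mul_pow_mul_exp_neg_le (k : ℕ) :
    ∀ᶠ r : ℕ in atTop, k * (16 * (r : ℝ) ^ 2) ^ (k - 1) * Real.exp (-r) ≤ 1 / (r : ℝ) ^ 16 := by
  have h := ((Real.tendsto_pow_mul_exp_neg_atTop_nhds_zero (2 * (k - 1) + 16)).comp
    tendsto_natCast_atTop_atTop).const_mul (k * 16 ^ (k - 1) : ℝ)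
  rw [mul_zero] at h
  filter_upwards [h.eventually_le_const one_pos, eventually_gt_atTop 0] with r hr hr0
  rw [le_div_iff₀ (by positivity)]
  refine le_of_eq_of_le ?_ hr
  simp only [Function.comp_apply, pow_add, pow_mul, mul_pow]
  ring

theorem eventually_choose_mul_exp_neg_min_pow_le (k : ℕ) :
    ∀ᶠ n : ℕ in atTop, ∀ (r : ℕ) (q : ℝ), n < r ^ 8 → 2 * r ≤ n → Real.log n ≤ n * q →
      n * q ≤ 2 * Real.log n →
      n.choose r * (k * (r * (n * q)) ^ (k - 1)
        * Real.exp (-(61 / 64 * min (r * q) 8)) ^ (n - r - k)) ≤ 1 / (n : ℝ) ^ 2 := by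
  obtain ⟨R, hR⟩ := eventually_atTop.1 (eventually_mul_pow_mul_exp_neg_le k)
  filter_upwards [eventually_ge_atTop (R ^ 8), eventually_ge_atTop (128 * k),
    tendsto_log_natCast_atTop.eventually_ge_atTop 1024, eventually_gt_atTop 0]
    with n hRn hkn hl hn r q hnr hrn hlq hql
  have hn0 : (0 : ℝ) < n := by exact_mod_cast hn
  have hnr' : (n : ℝ) ≤ (r : ℝ) ^ 8 := by exact_mod_cast hnr.le
  have hlog : Real.log n ≤ 8 * r := by
    calc Real.log n ≤ 8 * Real.log r := by simpa using Real.log_le_log hn0 hnr'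
      _ ≤ 8 * r := by
          gcongr
          exact Real.log_le_self r.cast_nonneg
  have hmean : r * (n * q) ≤ 16 * (r : ℝ) ^ 2 := by
    calc r * (n * q) ≤ r * (16 * r) :=
          mul_le_mul_of_nonneg_left (by linarith) r.cast_nonneg
      _ = 16 * (r : ℝ) ^ 2 := by ring
  have hmean0 : 0 ≤ r * (n * q) := mul_nonneg r.cast_nonneg (by linarith)
  calc _ = k * (r * (n * q)) ^ (k - 1)
        * (n.choose r * Real.exp (-(61 / 64 * min (r * q) 8)) ^ (n - r - k)) := by ring
    _ ≤ k * (16 * (r : ℝ) ^ 2) ^ (k - 1) * Real.exp (-r) := by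
        gcongr
        exact choose_mul_exp_neg_min_pow_le hnr hrn hl hlq hkn
    _ ≤ 1 / (r : ℝ) ^ 16 :=
        hR r ((Nat.pow_lt_pow_iff_left (by norm_num)).1 (hRn.trans_lt hnr)).le
    _ = 1 / ((r : ℝ) ^ 8) ^ 2 := by rw [← pow_mul]
    _ ≤ 1 / (n : ℝ) ^ 2 := by gcongr

/-! ### Summing over the separating sets -/

theorem choose_mul_pow_mul_exp_le {n r j : ℕ} {L C A : ℝ} (hr : 1 ≤ r)
    (hl : 1 ≤ Real.log n) (hL0 : 0 ≤ L) (hL2 : L ≤ 2 * Real.log n)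
    (hL : Real.log n + j * Real.log (Real.log n) + A ≤ L) :
    (n.choose r : ℝ) * ((r * L) ^ j * Real.exp (-(r * (L - C))))
      ≤ 2 ^ j * Real.exp (j + C - A) ^ r := by
  set l := Real.log n
  have hn0 : (0 : ℝ) < n := Nat.cast_pos.2 (Nat.pos_of_ne_zero (by rintro rfl; norm_num [l] at hl))
  have hr' : (1 : ℝ) ≤ r := by exact_mod_cast hr
  have hchoose : (n.choose r : ℝ) ≤ Real.exp (r * l) := by
    rw [Real.exp_nat_mul, Real.exp_log hn0]
    exact_mod_cast Nat.choose_le_pow n r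
  have hpow : ((r : ℝ) * L) ^ j ≤ 2 ^ j * Real.exp (r * (j + j * Real.log l)) := by
    calc ((r : ℝ) * L) ^ j ≤ (Real.exp r * (2 * l)) ^ j := by
          gcongr
          linarith [Real.add_one_le_exp (r : ℝ)]
      _ = 2 ^ j * Real.exp (j * r + j * Real.log l) := by
          rw [Real.exp_add, Real.exp_nat_mul, Real.exp_nat_mul,
            Real.exp_log (by linarith : (0 : ℝ) < l), mul_pow, mul_pow]
          ring
      _ ≤ 2 ^ j * Real.exp (r * (j + j * Real.log l)) := by
          have : 0 ≤ j * Real.log l := mul_nonneg j.cast_nonneg (Real.log_nonneg hl)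
          gcongr
          nlinarith
  calc (n.choose r : ℝ) * ((r * L) ^ j * Real.exp (-(r * (L - C))))
      ≤ Real.exp (r * l) * (2 ^ j * Real.exp (r * (j + j * Real.log l))
          * Real.exp (-(r * (L - C)))) := by gcongr
    _ = 2 ^ j * Real.exp (r * (l + j * Real.log l + (j + C) - L)) := by
        rw [mul_assoc, mul_left_comm, ← Real.exp_add, ← Real.exp_add]
        ring_nf
    _ ≤ 2 ^ j * Real.exp (r * (j + C - A)) := by
        gcongr 2 ^ j * Real.exp (r * ?_)
        linarith
    _ = 2 ^ j * Real.exp (j + C - A) ^ r := by rw [Real.exp_nat_mul]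

/-- The bound `e r`, of the shape required by `gonMeasure_not_kConnected_le`, for the probability
that a set of `r` nodes with expanding key rings is avoided by the other nodes up to `k`. The
threshold `r ≤ n ^ (1/8)` separates the two regimes. -/
def avoidBound (C : ℝ) (n k : ℕ) (q : ℝ) (r : ℕ) : ℝ :=
  if r ^ 8 ≤ n then Real.exp (-(r * (n * q - C)))
  else Real.exp (-(61 / 64 * min (r * q) 8)) ^ (n - r - k)

theorem sum_choose_mul_avoidBound_le {n k : ℕ} {C A q : ℝ} (hl : 1 ≤ Real.log n)
    (hlq : Real.log n ≤ n * q) (hql : n * q ≤ 2 * Real.log n)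
    (hA : Real.log n + (k - 1 : ℕ) * Real.log (Real.log n) + A ≤ n * q)
    (hAC : Real.exp ((k - 1 : ℕ) + C - A) ≤ 1 / 2)
    (hlarge : ∀ r : ℕ, n < r ^ 8 → 2 * r ≤ n →
      n.choose r * (k * (r * (n * q)) ^ (k - 1)
        * Real.exp (-(61 / 64 * min (r * q) 8)) ^ (n - r - k)) ≤ 1 / (n : ℝ) ^ 2) :
    ∑ r ∈ Finset.Icc 1 (n / 2), n.choose r * (k * (r * (n * q)) ^ (k - 1) * avoidBound C n k q r)
      ≤ k * 2 ^ (k - 1) * (2 * Real.exp ((k - 1 : ℕ) + C - A)) + 1 / n := by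
  set η := Real.exp ((k - 1 : ℕ) + C - A)
  have hterm : ∀ r ∈ Finset.Icc 1 (n / 2),
      n.choose r * (k * (r * (n * q)) ^ (k - 1) * avoidBound C n k q r)
        ≤ k * 2 ^ (k - 1) * η ^ r + 1 / (n : ℝ) ^ 2 := fun r hr => by
    obtain ⟨hr1, hr2⟩ := Finset.mem_Icc.1 hr
    rw [avoidBound]
    split_ifs with hrn
    · refine le_add_of_le_of_nonneg ?_ (by positivity)
      calc _ = k * (n.choose r * ((r * (n * q)) ^ (k - 1) * Real.exp (-(r * (n * q - C))))) := by
            ring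
        _ ≤ k * (2 ^ (k - 1) * η ^ r) := mul_le_mul_of_nonneg_left
            (choose_mul_pow_mul_exp_le hr1 hl (by linarith) hql hA) k.cast_nonneg
        _ = k * 2 ^ (k - 1) * η ^ r := by ring
    · exact le_add_of_nonneg_of_le (by positivity) (hlarge r (not_le.1 hrn) (by omega))
  have hgeom : ∑ r ∈ Finset.Icc 1 (n / 2), η ^ r ≤ 2 * η := by
    rw [← Finset.Ico_succ_right_eq_Icc, Finset.sum_Ico_eq_sum_range]
    simp only [add_comm 1]
    exact sum_range_pow_succ_le (Real.exp_pos _).le hAC _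
  have hcount : ((n / 2 : ℕ) : ℝ) * (1 / (n : ℝ) ^ 2) ≤ 1 / (n : ℝ) := by
    calc ((n / 2 : ℕ) : ℝ) * (1 / (n : ℝ) ^ 2) ≤ (n : ℝ) * (1 / (n : ℝ) ^ 2) := by
          gcongr
          omega
      _ = 1 / (n : ℝ) := by field_simp
  calc _ ≤ ∑ r ∈ Finset.Icc 1 (n / 2), (k * 2 ^ (k - 1) * η ^ r + 1 / (n : ℝ) ^ 2) :=
        Finset.sum_le_sum hterm
    _ = k * 2 ^ (k - 1) * ∑ r ∈ Finset.Icc 1 (n / 2), η ^ r + (n / 2 : ℕ) * (1 / (n : ℝ) ^ 2) := by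
        rw [Finset.sum_add_distrib, ← Finset.mul_sum, Finset.sum_const, nsmul_eq_mul, Nat.card_Icc,
          Nat.add_sub_cancel]
    _ ≤ _ := by gcongr

namespace NearCritical

variable {c c₁ : ℝ} {k : ℕ}

open Classical in
theorem eventually_expect_keyExpanding_mul_le (hc : 0 < c) (hc₁ : 0 < c₁) (k : ℕ) :
    ∀ᶠ n : ℕ in atTop, ∀ (K P : ℕ) (p : ℝ), NearCritical c c₁ n K P p → ∀ T : Finset (Fin n),
      𝔼 σ : Fin n → KeyRing P K, (if KeyExpanding (Real.exp (-256)) T σ then 1 else 0)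
          * avoidProb p σ T ^ (n - #T - k)
        ≤ avoidBound (5 * c₁ + 2) n k (p * ((K : ℝ) ^ 2 / P)) #T := by
  filter_upwards [eventually_expect_avoidProb_pow_le hc hc₁ k,
    eventually_avoidProb_le (c₁ := c₁) hc (Real.exp_pos (-256))] with n hsmall hlarge K P p h T
  have havoid (σ : Fin n → KeyRing P K) : 0 ≤ avoidProb p σ T := avoidProb_nonneg h.le_one σ T
  rw [avoidBound]
  split_ifs with hT
  · refine (Finset.expect_le_expect fun σ _ => ?_).trans (hsmall K P p h T hT)
    exact mul_le_of_le_one_left (pow_nonneg (havoid σ) _) (by split_ifs <;> norm_num)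
  · have := nonempty_keyRing h.le_pool
    refine Finset.expect_le Finset.univ_nonempty fun σ _ => ?_
    split_ifs with hσ
    · rw [one_mul]
      exact pow_le_pow_left₀ (havoid σ) (hlarge K P p h T σ hσ) _
    · rw [zero_mul]
      positivity

theorem eventually_gonMeasure_not_kConnected_le (hc : 0 < c) (hc₁ : 0 < c₁) (hk : 1 ≤ k) :
    ∀ᶠ n : ℕ in atTop, ∀ (K P : ℕ) (p : ℝ), NearCritical c c₁ n K P p → ∀ A : ℝ,
      Real.log n + (k - 1 : ℕ) * Real.log (Real.log n) + A ≤ n * (p * ((K : ℝ) ^ 2 / P)) →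
      Real.exp ((k - 1 : ℕ) + (5 * c₁ + 2) - A) ≤ 1 / 2 →
      (gonMeasure n K P p).real {ω | ¬ KConnected (gonGraph ω) k}
        ≤ 2 * (Real.exp 1 * (K / c) * Real.exp (-K))
          + (k * 2 ^ (k - 1) * (2 * Real.exp ((k - 1 : ℕ) + (5 * c₁ + 2) - A)) + 1 / n) := by
  have hK : ∀ᶠ κ : ℝ in atTop, 128 ≤ κ ∧ Real.exp 1 * (κ / c) * Real.exp (-κ) ≤ 1 / 2 := by
    filter_upwards [eventually_ge_atTop 128, eventually_mul_exp_neg_mul_le one_pos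
      (by positivity : 0 < 1 / 2 * c / Real.exp 1)] with κ hκ hexp
    rw [one_mul, le_div_iff₀ (Real.exp_pos 1)] at hexp
    refine ⟨hκ, ?_⟩
    rw [mul_div_assoc', div_mul_eq_mul_div, div_le_iff₀ hc]
    linarith
  filter_upwards [eventually_expect_keyExpanding_mul_le hc hc₁ k,
    eventually_choose_mul_exp_neg_min_pow_le k, eventually_keyRing (c₁ := c₁) hc hK,
    tendsto_log_natCast_atTop.eventually_ge_atTop 1, eventually_ge_atTop k]
    with n hexpect hlarge hK hl hkn K P p h A hA hAC
  obtain ⟨hK128, hη⟩ := hK K P p h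
  refine (gonMeasure_not_kConnected_le h.le_pool h.nonneg h.le_one hk hkn (hl.trans h.log_le_mean)
    (dependsOn_keyExpanding (Real.exp (-256))) fun T _ _ => hexpect K P p h T).trans ?_
  refine add_le_add
    (expect_not_keyExpanding_le h.le_pool (by exact_mod_cast hK128) hc h.mul_le_pool hη) ?_
  exact sum_choose_mul_avoidBound_le hl h.log_le_mean h.mean_le_log hA hAC fun r hr hrn =>
    hlarge r _ hr hrn h.log_le_mean h.mean_le_log

end NearCritical

/-! ### Thinning to the near-critical window -/

/-- The deviation `α_n` of a mean degree `L` from the critical value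
`log n + (k - 1) * log (log n)` for `k`-connectivity. -/
def deviation (k n : ℕ) (L : ℝ) : ℝ :=
  L - (Real.log n + (k - 1 : ℕ) * Real.log (Real.log n))

theorem tendsto_sub_mul_log_atTop (a : ℝ) :
    Tendsto (fun x : ℝ => x - a * Real.log x) atTop atTop :=
  (Asymptotics.IsEquivalent.refl.sub_isLittleO
    (Real.isLittleO_log_id_atTop.const_mul_left a)).symm.tendsto_atTop tendsto_id

theorem tendsto_deviation_min {k : ℕ} {L : ℕ → ℝ}
    (hL : Tendsto (fun n => deviation k n (L n)) atTop atTop) :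
    Tendsto (fun n => deviation k n (min (L n) (2 * Real.log n))) atTop atTop := by
  have hlog : Tendsto (fun n => deviation k n (2 * Real.log n)) atTop atTop := by
    refine ((tendsto_sub_mul_log_atTop (k - 1 : ℕ)).comp tendsto_log_natCast_atTop).congr
      fun n => ?_
    rw [deviation, Function.comp_apply]
    ring
  refine tendsto_atTop.2 fun b => ?_
  filter_upwards [hL.eventually_ge_atTop b, hlog.eventually_ge_atTop b] with n hLn hln
  rw [deviation, ← min_sub_sub_right]
  exact le_min hLn hln

theorem mul_min_div_eq_min {a p M : ℝ} (ha : 0 ≤ a) (hM : 0 ≤ M) :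
    a * min p (M / a) = min (a * p) M := by
  rcases ha.eq_or_lt with rfl | ha
  · rw [zero_mul, zero_mul, min_eq_left hM]
  · rw [mul_min_of_nonneg _ _ ha.le, mul_div_cancel₀ _ ha.ne']

theorem gonMeasure_not_kConnected_anti {n K P k : ℕ} {p q : ℝ} (hKP : K ≤ P) (hq0 : 0 ≤ q)
    (hqp : q ≤ p) (hp1 : p ≤ 1) :
    (gonMeasure n K P p).real {ω | ¬ KConnected (gonGraph ω) k}
      ≤ (gonMeasure n K P q).real {ω | ¬ KConnected (gonGraph ω) k} := by
  have := isProbabilityMeasure_gonMeasure (n := n) hKP hq0 (hqp.trans hp1)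
  have := isProbabilityMeasure_gonMeasure (n := n) hKP (hq0.trans hqp) hp1
  have hmono := gonMeasure_mono (n := n) hKP hq0 hqp hp1 (A := {G | KConnected G k})
    fun _ _ hGH hG => hG.mono hGH
  simp only [← Set.compl_ofPred, probReal_compl_eq_one_sub MeasurableSet.of_discrete]
  exact sub_le_sub_left hmono 1

section Sequences

variable {k : ℕ} {c c₁ : ℝ} {K P : ℕ → ℕ} {p : ℕ → ℝ}

theorem tendsto_keyRing_of_nearCritical (hc : 0 < c)
    (h : ∀ᶠ n in atTop, NearCritical c c₁ n (K n) (P n) (p n)) :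
    Tendsto (fun n => (K n : ℝ)) atTop atTop :=
  tendsto_atTop.2 fun b => by
    filter_upwards [h, NearCritical.eventually_keyRing hc (eventually_ge_atTop b)] with n hn hK
    exact hK _ _ _ hn

theorem tendsto_gonMeasure_not_kConnected_of_nearCritical (hc : 0 < c) (hc₁ : 0 < c₁) (hk : 1 ≤ k)
    (h : ∀ᶠ n in atTop, NearCritical c c₁ n (K n) (P n) (p n))
    (hα : Tendsto (fun n => deviation k n (n * (p n * ((K n : ℝ) ^ 2 / P n)))) atTop atTop) :
    Tendsto (fun n => (gonMeasure n (K n) (P n) (p n)).real {ω | ¬ KConnected (gonGraph ω) k})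
      atTop (nhds 0) := by
  set α : ℕ → ℝ := fun n => deviation k n (n * (p n * ((K n : ℝ) ^ 2 / P n))) with hαdef
  have hkeys : Tendsto (fun n => 2 * (Real.exp 1 * (K n / c) * Real.exp (-(K n)))) atTop
      (nhds 0) := by
    have hexp := ((Real.tendsto_pow_mul_exp_neg_atTop_nhds_zero 1).comp
      (tendsto_keyRing_of_nearCritical hc h)).const_mul (2 * Real.exp 1 / c)
    rw [mul_zero] at hexp
    refine hexp.congr fun n => ?_
    rw [Function.comp_apply, pow_one]
    ring
  have hexpα : Tendsto (fun n => Real.exp ((k - 1 : ℕ) + (5 * c₁ + 2) - α n)) atTop (nhds 0) :=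
    Real.tendsto_exp_atBot.comp <| tendsto_const_nhds.add_atBot (tendsto_neg_atTop_atBot.comp hα)
  have hbound := hkeys.add (((hexpα.const_mul 2).const_mul (k * 2 ^ (k - 1) : ℝ)).add
    tendsto_one_div_atTop_nhds_zero_nat)
  simp only [mul_zero, add_zero] at hbound
  refine squeeze_zero' (Eventually.of_forall fun n => measureReal_nonneg) ?_ hbound
  filter_upwards [h, NearCritical.eventually_gonMeasure_not_kConnected_le hc hc₁ hk,
    hexpα.eventually_le_const (by norm_num : (0 : ℝ) < 1 / 2)] with n hn hle hsmall
  exact hle _ _ _ hn (α n) (by simp only [hαdef, deviation, add_sub_cancel, le_refl]) hsmall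

theorem exists_le_nearCritical (hKP : ∀ n, K n ≤ P n) (hp0 : ∀ n, 0 ≤ p n) (hp1 : ∀ n, p n ≤ 1)
    (hP : ∀ᶠ n : ℕ in atTop, c * n ≤ P n)
    (hx : ∀ᶠ n : ℕ in atTop, (K n : ℝ) ^ 2 / P n ≤ c₁ / Real.log n)
    (hα : Tendsto (fun n => deviation k n (n * (p n * ((K n : ℝ) ^ 2 / P n)))) atTop atTop) :
    ∃ p' : ℕ → ℝ, (∀ᶠ n in atTop, p' n ≤ p n ∧ NearCritical c c₁ n (K n) (P n) (p' n)) ∧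
      Tendsto (fun n => deviation k n (n * (p' n * ((K n : ℝ) ^ 2 / P n)))) atTop atTop := by
  have hmin (n : ℕ) := mul_min_div_eq_min (p := p n) (M := 2 * Real.log n)
    (by positivity : 0 ≤ n * ((K n : ℝ) ^ 2 / P n)) (by positivity)
  simp only [mul_assoc, mul_comm ((K _ : ℝ) ^ 2 / P _)] at hmin
  refine ⟨fun n => min (p n) (2 * Real.log n / (n * ((K n : ℝ) ^ 2 / P n))), ?_, ?_⟩
  · filter_upwards [tendsto_log_natCast_atTop.eventually_ge_atTop 1, hα.eventually_ge_atTop 0,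
      hP, hx] with n hn hαn hP hx
    have hloglog : 0 ≤ (k - 1 : ℕ) * Real.log (Real.log n) :=
      mul_nonneg (Nat.cast_nonneg _) (Real.log_nonneg hn)
    have hmean : Real.log n ≤ n * (p n * ((K n : ℝ) ^ 2 / P n)) := by
      rw [deviation] at hαn
      linarith
    refine ⟨min_le_left _ _, hKP n, le_min (hp0 n) (by positivity), (min_le_left _ _).trans (hp1 n),
      hP, hx, ?_, ?_⟩
    · rw [hmin]
      exact le_min hmean (by linarith)
    · rw [hmin]
      exact min_le_right _ _
  · simp only [hmin]
    exact tendsto_deviation_min hα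

theorem tendsto_gonMeasure_not_kConnected (hk : 1 ≤ k) (hc : 0 < c) (hc₁ : 0 < c₁)
    (hKP : ∀ n, K n ≤ P n) (hp0 : ∀ n, 0 ≤ p n) (hp1 : ∀ n, p n ≤ 1)
    (hP : ∀ᶠ n : ℕ in atTop, c * n ≤ P n)
    (hx : ∀ᶠ n : ℕ in atTop, (K n : ℝ) ^ 2 / P n ≤ c₁ / Real.log n)
    (hα : Tendsto (fun n => deviation k n (n * (p n * ((K n : ℝ) ^ 2 / P n)))) atTop atTop) :
    Tendsto (fun n => (gonMeasure n (K n) (P n) (p n)).real {ω | ¬ KConnected (gonGraph ω) k})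
      atTop (nhds 0) := by
  obtain ⟨p', hp', hα'⟩ := exists_le_nearCritical hKP hp0 hp1 hP hx hα
  refine squeeze_zero' (Eventually.of_forall fun n => measureReal_nonneg) ?_ <|
    tendsto_gonMeasure_not_kConnected_of_nearCritical hc hc₁ hk (hp'.mono fun n hn => hn.2) hα'
  filter_upwards [hp'] with n ⟨hle, hn⟩
  exact gonMeasure_not_kConnected_anti (hKP n) hn.nonneg hle (hp1 n)

end Sequences

theorem tendsto_measure_one_of_measureReal_compl {Ω : ℕ → Type*} [∀ n, MeasurableSpace (Ω n)]
    {μ : ∀ n, Measure (Ω n)} [∀ n, IsProbabilityMeasure (μ n)] {S : ∀ n, Set (Ω n)}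
    (hS : ∀ n, MeasurableSet (S n)) (h : Tendsto (fun n => (μ n).real (S n)ᶜ) atTop (nhds 0)) :
    Tendsto (fun n => μ n (S n)) atTop (nhds 1) := by
  refine (ENNReal.tendsto_toReal_iff (fun n => measure_ne_top _ _) ENNReal.one_ne_top).1 ?_
  have := h.const_sub 1
  simp only [probReal_compl_eq_one_sub (hS _), sub_sub_cancel, sub_zero] at this
  exact this

/-- one-law with the approximation `p_s ≈ K²/P`. -/
theorem gon_one_law_approx
    (k : ℕ) (hk : 1 ≤ k) (K P : ℕ → ℕ) (p : ℕ → ℝ)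
    (hKP : ∀ n, K n ≤ P n) (hp0 : ∀ n, 0 < p n) (hp1 : ∀ n, p n < 1)
    (hK2 : ∀ᶠ n : ℕ in atTop, 2 ≤ K n)
    (hP : ∃ c : ℝ, 0 < c ∧ ∀ᶠ n : ℕ in atTop, c * (n : ℝ) ≤ (P n : ℝ))
    (hKsq : ∃ c : ℝ, 0 < c ∧ ∀ᶠ n : ℕ in atTop,
      (K n : ℝ) ^ 2 / (P n : ℝ) ≤ c / Real.log n)
    (α : ℕ → ℝ)
    (hα : ∀ n, 1 ≤ n → p n * ((K n : ℝ) ^ 2 / (P n : ℝ)) =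
      (Real.log n + ((k : ℝ) - 1) * Real.log (Real.log n) + α n) / (n : ℝ))
    (hαtop : Tendsto α atTop atTop) :
    Tendsto (fun n : ℕ => gonMeasure n (K n) (P n) (p n)
        {ω | KConnected (gonGraph ω) k}) atTop (nhds 1) ∧
    Tendsto (fun n : ℕ => gonMeasure n (K n) (P n) (p n)
        {ω | k ≤ minDeg (gonGraph ω)}) atTop (nhds 1) := by
  obtain ⟨c, hc, hP⟩ := hP
  obtain ⟨c₁, hc₁, hKsq⟩ := hKsq
  have (n : ℕ) : IsProbabilityMeasure (gonMeasure n (K n) (P n) (p n)) :=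
    isProbabilityMeasure_gonMeasure (hKP n) (hp0 n).le (hp1 n).le
  have hdev : ∀ᶠ n in atTop, α n = deviation k n (n * (p n * ((K n : ℝ) ^ 2 / P n))) := by
    filter_upwards [eventually_ge_atTop 1] with n hn
    rw [hα n hn, mul_div_cancel₀ _ (by positivity), deviation, Nat.cast_pred hk,
      add_sub_cancel_left]
  have hconn := tendsto_measure_one_of_measureReal_compl (fun n => MeasurableSet.of_discrete) <|
    tendsto_gonMeasure_not_kConnected hk hc hc₁ hKP (fun n => (hp0 n).le) (fun n => (hp1 n).le)
      hP hKsq (hαtop.congr' hdev)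
  refine ⟨hconn, tendsto_of_tendsto_of_tendsto_of_le_of_le' hconn tendsto_const_nhds ?_
    (Eventually.of_forall fun n => prob_le_one)⟩
  filter_upwards [eventually_gt_atTop k] with n hkn
  exact measure_mono fun ω hω => KConnected.le_minDeg (by simpa using hkn) hω
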